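/- Let u be a monotone traveling wave solution of the unbalanced Allen-Cahn equation in the plane connecting −1 to 1. Then the zero level set of u is the graph y = k(x) of a C³ function k : ℝ → ℝ which is globally Lipschitz: there exists a constant C > 0 such that |k'(x)| ≤ C for all x ∈ ℝ. -/

import Mathlib

open Real Filter MeasureTheory Metric

noncomputable def pdx (u : ℝ → ℝ → ℝ) (x y : ℝ) : ℝ := deriv (fun t => u t y) x

noncomputable def pdy (u : ℝ → ℝ → ℝ) (x y : ℝ) : ℝ := deriv (fun t => u x t) y

noncomputable def pdxx (u : ℝ → ℝ → ℝ) (x y : ℝ) : ℝ := deriv (fun t => pdx u t y) x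

noncomputable def pdyy (u : ℝ → ℝ → ℝ) (x y : ℝ) : ℝ := deriv (fun t => pdy u x t) y

/-- `F` is an unbalanced double-well potential. -/
def UnbalancedDoubleWell (F : ℝ → ℝ) : Prop :=
  ContDiff ℝ 3 F ∧ deriv F (-1) = 0 ∧ deriv F 1 = 0 ∧
  0 < deriv (deriv F) (-1) ∧ 0 < deriv (deriv F) 1 ∧
  (∀ s ∈ Set.Ioo (-1 : ℝ) 0, 0 < deriv F s) ∧
  (∀ s ∈ Set.Ioo (0 : ℝ) 1, deriv F s < 0) ∧
  F (-1) = 0 ∧ 0 < F 1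

/-- `u` is a `C³` solution of `Δu + c uᵧ = F'(u)` on `ℝ²` with `|u| ≤ 1`
which is monotone in `y`. -/
def IsSolution (F : ℝ → ℝ) (c : ℝ) (u : ℝ → ℝ → ℝ) : Prop :=
  ContDiff ℝ 3 (fun p : ℝ × ℝ => u p.1 p.2) ∧
  (∀ x y : ℝ, pdxx u x y + pdyy u x y + c * pdy u x y = deriv F (u x y)) ∧
  (∀ x y : ℝ, |u x y| ≤ 1) ∧
  (∀ x y : ℝ, 0 < pdy u x y)

/-- A monotone traveling wave solution connecting `-1` to `1`. -/
def IsTravelingWave (F : ℝ → ℝ) (c : ℝ) (u : ℝ → ℝ → ℝ) : Prop :=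
  IsSolution F c u ∧
  (∀ x : ℝ, Tendsto (fun y => u x y) atTop (nhds 1)) ∧
  (∀ x : ℝ, Tendsto (fun y => u x y) atBot (nhds (-1)))

/-!
Along the level set `k' = -u_x / u_y`, and `u_x` is bounded by interior gradient estimates, so it
suffices to bound `u_y` from below on `{u = 0}`. Suppose `u_y` is tiny at a zero `(x₀, y₀)`. As
`u_y ≥ 0` solves the linearised equation `Δw + c w_y = F''(u) w`, a quantitative strong minimum
principle makes `u_y`, and by the gradient estimate also `u_yy`, small on a large square around
`(x₀, y₀)`. Hence `x ↦ u (x, y₀)` almost solves `U'' = F'(U)` there, and it starts at the maximum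
`0` of `F`. Such a profile either comes close to the higher well `1` or accumulates energy
`F(U) - F(1) + U'² / 2` linearly, so its energy on a suitable interval is bounded below by a
positive constant. This contradicts the upper bound obtained by integrating
`∂_x (u_x u_y) + ∂_y ((u_y² - u_x²) / 2 - F(u)) = -c u_y² ≤ 0`
over the half strip above that interval, since `u → 1` at the top.
-/

open Set Function
open scoped Topology

section PlaneCalculus

variable {E : Type*} [NormedAddCommGroup E] [NormedSpace ℝ E] {u v : ℝ → ℝ → ℝ}

lemma hasDerivAt_comp_prodMk_left {f : ℝ × E → ℝ} {x : ℝ} {y : E}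
    (hf : DifferentiableAt ℝ f (x, y)) :
    HasDerivAt (fun t => f (t, y)) (fderiv ℝ f (x, y) (1, 0)) x :=
  hf.hasFDerivAt.comp_hasDerivAt x ((hasDerivAt_id x).prodMk (hasDerivAt_const x y))

lemma hasDerivAt_comp_prodMk_right {f : E × ℝ → ℝ} {x : E} {y : ℝ}
    (hf : DifferentiableAt ℝ f (x, y)) :
    HasDerivAt (fun t => f (x, t)) (fderiv ℝ f (x, y) (0, 1)) y :=
  hf.hasFDerivAt.comp_hasDerivAt y ((hasDerivAt_const y x).prodMk (hasDerivAt_id y))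

lemma pdx_eq_fderiv (hu : Differentiable ℝ (uncurry u)) (x y : ℝ) :
    pdx u x y = fderiv ℝ (uncurry u) (x, y) (1, 0) :=
  (hasDerivAt_comp_prodMk_left (hu (x, y))).deriv

lemma pdy_eq_fderiv (hu : Differentiable ℝ (uncurry u)) (x y : ℝ) :
    pdy u x y = fderiv ℝ (uncurry u) (x, y) (0, 1) :=
  (hasDerivAt_comp_prodMk_right (hu (x, y))).deriv

lemma hasDerivAt_pdx (hu : Differentiable ℝ (uncurry u)) (x y : ℝ) :
    HasDerivAt (fun t => u t y) (pdx u x y) x :=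
  (hasDerivAt_comp_prodMk_left (hu (x, y))).differentiableAt.hasDerivAt

lemma hasDerivAt_pdy (hu : Differentiable ℝ (uncurry u)) (x y : ℝ) :
    HasDerivAt (u x) (pdy u x y) y :=
  (hasDerivAt_comp_prodMk_right (hu (x, y))).differentiableAt.hasDerivAt

lemma contDiff_pdx {m n : WithTop ℕ∞} (hu : ContDiff ℝ n (uncurry u)) (hmn : m + 1 ≤ n) :
    ContDiff ℝ m (uncurry (pdx u)) := by
  have hd : Differentiable ℝ (uncurry u) := (hu.of_le hmn).differentiable (by simp)
  have h : uncurry (pdx u) = fun p => fderiv ℝ (uncurry u) p (1, 0) :=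
    funext fun p => pdx_eq_fderiv hd p.1 p.2
  exact h ▸ (hu.fderiv_right hmn).clm_apply contDiff_const

lemma contDiff_pdy {m n : WithTop ℕ∞} (hu : ContDiff ℝ n (uncurry u)) (hmn : m + 1 ≤ n) :
    ContDiff ℝ m (uncurry (pdy u)) := by
  have hd : Differentiable ℝ (uncurry u) := (hu.of_le hmn).differentiable (by simp)
  have h : uncurry (pdy u) = fun p => fderiv ℝ (uncurry u) p (0, 1) :=
    funext fun p => pdy_eq_fderiv hd p.1 p.2
  exact h ▸ (hu.fderiv_right hmn).clm_apply contDiff_const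

lemma pdx_pdy_comm (hu : ContDiff ℝ 2 (uncurry u)) (x y : ℝ) :
    pdx (pdy u) x y = pdy (pdx u) x y := by
  have hd : Differentiable ℝ (uncurry u) := hu.differentiable (by simp)
  have hd' : HasFDerivAt (fderiv ℝ (uncurry u)) (fderiv ℝ (fderiv ℝ (uncurry u)) (x, y)) (x, y) :=
    ((hu.fderiv_right (m := 1) (by norm_num)).differentiable (by simp) (x, y)).hasFDerivAt
  have hsymm : IsSymmSndFDerivAt ℝ (uncurry u) (x, y) :=
    hu.contDiffAt.isSymmSndFDerivAt (by simp)
  have hx : HasFDerivAt (uncurry (pdx u)) _ (x, y) :=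
    (hd'.clm_apply (hasFDerivAt_const ((1, 0) : ℝ × ℝ) (x, y))).congr_of_eventuallyEq
      (.of_forall fun p => pdx_eq_fderiv hd p.1 p.2)
  have hy : HasFDerivAt (uncurry (pdy u)) _ (x, y) :=
    (hd'.clm_apply (hasFDerivAt_const ((0, 1) : ℝ × ℝ) (x, y))).congr_of_eventuallyEq
      (.of_forall fun p => pdy_eq_fderiv hd p.1 p.2)
  have hxy := (hasDerivAt_comp_prodMk_left hy.differentiableAt).deriv
  have hyx := (hasDerivAt_comp_prodMk_right hx.differentiableAt).deriv
  rw [hy.fderiv] at hxy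
  rw [hx.fderiv] at hyx
  exact hxy.trans (Eq.trans (by simpa using hsymm (1, 0) (0, 1)) hyx.symm)

/-- The operator `Δ + c ∂_y` on the plane, the linear part of the travelling wave equation. -/
noncomputable def driftLaplacian (c : ℝ) (w : ℝ → ℝ → ℝ) (x y : ℝ) : ℝ :=
  pdxx w x y + pdyy w x y + c * pdy w x y

lemma pdx_sub (hu : Differentiable ℝ (uncurry u)) (hv : Differentiable ℝ (uncurry v)) (x y : ℝ) :
    pdx (u - v) x y = pdx u x y - pdx v x y :=
  ((hasDerivAt_pdx hu x y).sub (hasDerivAt_pdx hv x y)).deriv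

lemma pdy_sub (hu : Differentiable ℝ (uncurry u)) (hv : Differentiable ℝ (uncurry v)) (x y : ℝ) :
    pdy (u - v) x y = pdy u x y - pdy v x y :=
  ((hasDerivAt_pdy hu x y).sub (hasDerivAt_pdy hv x y)).deriv

lemma driftLaplacian_sub (hu : ContDiff ℝ 2 (uncurry u)) (hv : ContDiff ℝ 2 (uncurry v))
    (c x y : ℝ) :
    driftLaplacian c (u - v) x y = driftLaplacian c u x y - driftLaplacian c v x y := by
  have hu₁ : Differentiable ℝ (uncurry u) := hu.differentiable (by simp)
  have hv₁ : Differentiable ℝ (uncurry v) := hv.differentiable (by simp)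
  have hxx : pdxx (u - v) x y = pdxx u x y - pdxx v x y := by
    have h : pdx (u - v) = pdx u - pdx v := funext₂ fun x y => pdx_sub hu₁ hv₁ x y
    have hsub := pdx_sub ((contDiff_pdx (m := 1) hu (by norm_num)).differentiable (by simp))
      ((contDiff_pdx (m := 1) hv (by norm_num)).differentiable (by simp)) x y
    rwa [← h] at hsub
  have hyy : pdyy (u - v) x y = pdyy u x y - pdyy v x y := by
    have h : pdy (u - v) = pdy u - pdy v := funext₂ fun x y => pdy_sub hu₁ hv₁ x y
    have hsub := pdy_sub ((contDiff_pdy (m := 1) hu (by norm_num)).differentiable (by simp))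
      ((contDiff_pdy (m := 1) hv (by norm_num)).differentiable (by simp)) x y
    rwa [← h] at hsub
  rw [driftLaplacian, hxx, hyy, pdy_sub hu₁ hv₁, driftLaplacian, driftLaplacian]
  ring

lemma pdx_comp_neg (u : ℝ → ℝ → ℝ) (x y : ℝ) :
    pdx (fun x y => u (-x) y) x y = -pdx u (-x) y :=
  deriv_comp_neg (fun t => u t y) x

lemma pdxx_comp_neg (u : ℝ → ℝ → ℝ) (x y : ℝ) :
    pdxx (fun x y => u (-x) y) x y = pdxx u (-x) y := by
  have h : pdx (fun x y => u (-x) y) = fun x y => -pdx u (-x) y := funext₂ (pdx_comp_neg u)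
  calc pdxx (fun x y => u (-x) y) x y = deriv (fun t => -pdx u (-t) y) x := by rw [pdxx, h]
    _ = pdxx u (-x) y := by
      rw [deriv.fun_neg, deriv_comp_neg (fun t => pdx u t y), neg_neg, pdxx]

lemma driftLaplacian_comp_neg (c : ℝ) (u : ℝ → ℝ → ℝ) (x y : ℝ) :
    driftLaplacian c (fun x y => u (-x) y) x y = driftLaplacian c u (-x) y := by
  rw [driftLaplacian, pdxx_comp_neg]
  rfl

/-- The substitution `v ↦ exp (c y / 2) v`, recentred at `(x₀, y₀)`, which removes the
first-order term from `driftLaplacian c`. -/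
noncomputable def driftGauge (c x₀ y₀ : ℝ) (v : ℝ → ℝ → ℝ) (x y : ℝ) : ℝ :=
  exp (c / 2 * y) * v (x₀ + x) (y₀ + y)

lemma contDiff_driftGauge {n : WithTop ℕ∞} (hv : ContDiff ℝ n (uncurry v)) (c x₀ y₀ : ℝ) :
    ContDiff ℝ n (uncurry (driftGauge c x₀ y₀ v)) :=
  (by fun_prop : ContDiff ℝ n fun p : ℝ × ℝ => exp (c / 2 * p.2)).mul
    (hv.comp (by fun_prop : ContDiff ℝ n fun p : ℝ × ℝ => (x₀ + p.1, y₀ + p.2)))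

lemma pdx_driftGauge (c x₀ y₀ : ℝ) (v : ℝ → ℝ → ℝ) :
    pdx (driftGauge c x₀ y₀ v) = driftGauge c x₀ y₀ (pdx v) := by
  ext x y
  simp only [pdx, driftGauge, deriv_const_mul_field]
  rw [deriv_comp_const_add (fun t => v t (y₀ + y))]

lemma pdy_driftGauge (hv : Differentiable ℝ (uncurry v)) (c x₀ y₀ : ℝ) :
    pdy (driftGauge c x₀ y₀ v) = driftGauge c x₀ y₀ (fun x y => pdy v x y + c / 2 * v x y) := by
  ext x y
  have hexp : HasDerivAt (fun t => exp (c / 2 * t)) (exp (c / 2 * y) * (c / 2)) y := by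
    simpa using ((hasDerivAt_id y).const_mul (c / 2)).exp
  have h := (hexp.mul ((hasDerivAt_pdy hv (x₀ + x) (y₀ + y)).comp_const_add y₀ y)).deriv
  refine h.trans ?_
  rw [driftGauge]
  ring

lemma driftLaplacian_driftGauge (hv : ContDiff ℝ 2 (uncurry v)) (c x₀ y₀ x y : ℝ) :
    driftLaplacian 0 (driftGauge c x₀ y₀ v) x y =
      driftGauge c x₀ y₀ (fun x y => driftLaplacian c v x y + c ^ 2 / 4 * v x y) x y := by
  have hv₁ : Differentiable ℝ (uncurry v) := hv.differentiable (by simp)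
  have hy : Differentiable ℝ (uncurry (pdy v)) :=
    (contDiff_pdy (m := 1) hv (by norm_num)).differentiable (by simp)
  have hxx : pdxx (driftGauge c x₀ y₀ v) x y = driftGauge c x₀ y₀ (pdxx v) x y := by
    change pdx (pdx _) x y = driftGauge c x₀ y₀ (pdx (pdx v)) x y
    rw [pdx_driftGauge, pdx_driftGauge]
  have hyy : pdyy (driftGauge c x₀ y₀ v) x y =
      driftGauge c x₀ y₀ (fun x y => pdyy v x y + c * pdy v x y + c ^ 2 / 4 * v x y) x y := by
    change pdy (pdy _) x y = _
    have hsum : Differentiable ℝ (uncurry fun x y => pdy v x y + c / 2 * v x y) :=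
      hy.add (hv₁.const_mul (c / 2))
    rw [pdy_driftGauge hv₁, pdy_driftGauge hsum]
    have hpdy : pdy (fun x y => pdy v x y + c / 2 * v x y) (x₀ + x) (y₀ + y) =
        pdyy v (x₀ + x) (y₀ + y) + c / 2 * pdy v (x₀ + x) (y₀ + y) :=
      ((hasDerivAt_pdy hy _ _).add ((hasDerivAt_pdy hv₁ _ _).const_mul (c / 2))).deriv
    simp only [driftGauge, hpdy]
    ring
  rw [driftLaplacian, hxx, hyy]
  simp only [driftGauge, driftLaplacian]
  ring

end PlaneCalculus

section ComparisonPrinciple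

variable {v w : ℝ → ℝ → ℝ} {c : ℝ}

lemma deriv_deriv_nonneg_of_isLocalMin {f : ℝ → ℝ} {a : ℝ} (h : IsLocalMin f a)
    (hf : ContinuousAt f a) : 0 ≤ deriv (deriv f) a := by
  by_contra! hneg
  have hconst : f =ᶠ[𝓝 a] fun _ => f a := by
    filter_upwards [h, isLocalMax_of_deriv_deriv_neg hneg h.deriv_eq_zero hf] with x hmin hmax
    exact le_antisymm hmax hmin
  rw [hconst.deriv.deriv_eq] at hneg
  simp at hneg

lemma driftLaplacian_nonneg_of_isLocalMin (hw : Continuous (uncurry w)) {x y : ℝ}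
    (h : IsLocalMin (uncurry w) (x, y)) : 0 ≤ driftLaplacian c w x y := by
  have hx : IsLocalMin (fun t => w t y) x :=
    h.comp_continuous (g := fun t => (t, y)) (by fun_prop)
  have hy : IsLocalMin (w x) y := h.comp_continuous (g := fun t => (x, t)) (by fun_prop)
  have hxx : 0 ≤ pdxx w x y := deriv_deriv_nonneg_of_isLocalMin hx
    (hw.comp (by fun_prop : Continuous fun t => (t, y))).continuousAt
  have hyy : 0 ≤ pdyy w x y := deriv_deriv_nonneg_of_isLocalMin hy
    (hw.comp (by fun_prop : Continuous fun t => (x, t))).continuousAt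
  have hzero : pdy w x y = 0 := hy.deriv_eq_zero
  rw [driftLaplacian, hzero, mul_zero, add_zero]
  exact add_nonneg hxx hyy

lemma nonneg_of_driftLaplacian_neg (hw : Continuous (uncurry w)) {S : Set (ℝ × ℝ)}
    (hS : IsCompact S) (hbdry : ∀ p ∈ frontier S, 0 ≤ w p.1 p.2)
    (hint : ∀ p ∈ interior S, w p.1 p.2 < 0 → driftLaplacian c w p.1 p.2 < 0) :
    ∀ p ∈ S, 0 ≤ w p.1 p.2 := by
  intro p hp
  obtain ⟨q, hq, hmin⟩ := hS.exists_isMinOn ⟨p, hp⟩ hw.continuousOn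
  by_contra! hneg
  have hqneg : w q.1 q.2 < 0 := (hmin hp).trans_lt hneg
  by_cases hqint : q ∈ interior S
  · exact (hint q hqint hqneg).not_ge (driftLaplacian_nonneg_of_isLocalMin hw
      (hmin.isLocalMin (mem_interior_iff_mem_nhds.1 hqint)))
  · exact hqneg.not_ge (hbdry q ⟨subset_closure hq, hqint⟩)

lemma le_of_driftLaplacian_lt (hv : ContDiff ℝ 2 (uncurry v)) (hw : ContDiff ℝ 2 (uncurry w))
    {S : Set (ℝ × ℝ)} (hS : IsCompact S) (hbdry : ∀ p ∈ frontier S, v p.1 p.2 ≤ w p.1 p.2)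
    (hint : ∀ p ∈ interior S, w p.1 p.2 < v p.1 p.2 →
      driftLaplacian c w p.1 p.2 < driftLaplacian c v p.1 p.2) :
    ∀ p ∈ S, v p.1 p.2 ≤ w p.1 p.2 := by
  intro p hp
  refine sub_nonneg.1 (nonneg_of_driftLaplacian_neg (c := c) (w := w - v)
    (hw.continuous.sub hv.continuous) hS (fun q hq => sub_nonneg.2 (hbdry q hq))
    (fun q hq hlt => ?_) p hp)
  rw [driftLaplacian_sub hw hv]
  exact sub_neg.2 (hint q hq (sub_neg.1 hlt))

end ComparisonPrinciple

section GradientEstimate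

/-- A quadratic polynomial vanishing at the origin with Laplacian `-4 * N`, dominating on the
boundary of `[0, 1] × [-1, 1]` every function bounded by `2 * M` that vanishes on `x = 0`. -/
def gradientBarrier (M N x y : ℝ) : ℝ :=
  2 * M * (y ^ 2 + 2 * x - x ^ 2) + 2 * N * (x - x ^ 2)

lemma driftLaplacian_gradientBarrier (M N x y : ℝ) :
    driftLaplacian 0 (gradientBarrier M N) x y = -4 * N := by
  have hx : pdx (gradientBarrier M N) = fun x _ => 2 * M * (2 - 2 * x) + 2 * N * (1 - 2 * x) := by
    ext x y
    refine HasDerivAt.deriv (((((((hasDerivAt_id' x).const_mul 2).const_add (y ^ 2)).sub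
      (hasDerivAt_pow 2 x)).const_mul (2 * M)).add
      (((hasDerivAt_id' x).sub (hasDerivAt_pow 2 x)).const_mul (2 * N))).congr_deriv ?_)
    norm_num
  have hy : pdy (gradientBarrier M N) = fun _ y => 4 * M * y := by
    ext x y
    refine HasDerivAt.deriv (((((((hasDerivAt_pow 2 y).add_const (2 * x)).sub_const
      (x ^ 2)).const_mul (2 * M)).add_const (2 * N * (x - x ^ 2)))).congr_deriv ?_)
    norm_num
    ring
  have hxx : pdxx (gradientBarrier M N) x y = -4 * M - 4 * N := by
    simp only [pdxx, hx]
    refine HasDerivAt.deriv ((((((hasDerivAt_id' x).const_mul 2).const_sub 2).const_mul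
      (2 * M)).add ((((hasDerivAt_id' x).const_mul 2).const_sub 1).const_mul
      (2 * N))).congr_deriv ?_)
    ring
  have hyy : pdyy (gradientBarrier M N) x y = 4 * M := by
    simp only [pdyy, hy]
    simp
  rw [driftLaplacian, hxx, hyy]
  ring

lemma two_mul_le_gradientBarrier {M N x y : ℝ} (hM : 0 ≤ M) (hN : 0 ≤ N) (hx : x ∈ Icc (0 : ℝ) 1)
    (h : x = 1 ∨ |y| = 1) : 2 * M ≤ gradientBarrier M N x y := by
  have hxx : 0 ≤ x - x ^ 2 := by nlinarith [hx.1, hx.2]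
  have hquad : 1 ≤ y ^ 2 + 2 * x - x ^ 2 := by
    rcases h with rfl | hy
    · linarith [sq_nonneg y]
    · rw [← sq_abs y, hy]
      linarith [hx.1]
  rw [gradientBarrier]
  linarith [mul_nonneg hN hxx, mul_le_mul_of_nonneg_left hquad hM]

lemma gradientBarrier_le_mul {M N x : ℝ} (hM : 0 ≤ M) (hN : 0 ≤ N) :
    gradientBarrier M N x 0 ≤ (4 * M + 2 * N) * x := by
  rw [gradientBarrier]
  linarith [mul_nonneg hM (sq_nonneg x), mul_nonneg hN (sq_nonneg x)]

lemma sub_comp_neg_le_gradientBarrier {v : ℝ → ℝ → ℝ} (hv : ContDiff ℝ 2 (uncurry v)) {M N : ℝ}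
    (hN : 0 < N) (hM : ∀ x y, |x| ≤ 1 → |y| ≤ 1 → |v x y| ≤ M)
    (hL : ∀ x y, |x| ≤ 1 → |y| ≤ 1 → |driftLaplacian 0 v x y| ≤ N)
    {x : ℝ} (hx : x ∈ Icc (0 : ℝ) 1) : v x 0 - v (-x) 0 ≤ gradientBarrier M N x 0 := by
  have hM0 : 0 ≤ M := (abs_nonneg _).trans (hM 0 0 (by simp) (by simp))
  have hv' : ContDiff ℝ 2 (uncurry fun x y => v (-x) y) :=
    hv.comp (by fun_prop : ContDiff ℝ 2 fun p : ℝ × ℝ => (-p.1, p.2))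
  have hodd : ContDiff ℝ 2 (uncurry (v - fun x y => v (-x) y)) := hv.sub hv'
  have hbar : ContDiff ℝ 2 (uncurry (gradientBarrier M N)) := by
    unfold gradientBarrier uncurry
    fun_prop
  refine le_of_driftLaplacian_lt (c := 0) (S := Icc 0 1 ×ˢ Icc (-1) 1) hodd hbar
    (isCompact_Icc.prod isCompact_Icc) ?_ ?_ (x, 0) ⟨hx, by norm_num⟩
  · rintro ⟨s, t⟩ hst
    rw [(isClosed_Icc.prod isClosed_Icc).frontier_eq, interior_prod_eq, interior_Icc,
      interior_Icc] at hst
    obtain ⟨⟨hs, ht⟩, hout⟩ := hst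
    change v s t - v (-s) t ≤ gradientBarrier M N s t
    rcases hs.1.eq_or_lt with rfl | hs0
    · rw [neg_zero, sub_self, gradientBarrier]
      linarith [mul_nonneg hM0 (sq_nonneg t)]
    have hst : s = 1 ∨ |t| = 1 := by
      by_contra! h
      exact hout ⟨⟨hs0, hs.2.lt_of_ne h.1⟩, abs_lt.1 ((abs_le.2 ht).lt_of_ne h.2)⟩
    have hs1 : |s| ≤ 1 := abs_le.2 ⟨by linarith [hs.1], hs.2⟩
    have ht1 : |t| ≤ 1 := abs_le.2 ht
    linarith [two_mul_le_gradientBarrier hM0 hN.le hs hst, (abs_le.1 (hM s t hs1 ht1)).2,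
      (abs_le.1 (hM (-s) t (by rwa [abs_neg]) ht1)).1]
  · rintro ⟨s, t⟩ hst -
    rw [interior_prod_eq, interior_Icc, interior_Icc] at hst
    have hs : |s| ≤ 1 := abs_le.2 ⟨by linarith [hst.1.1], hst.1.2.le⟩
    have ht : |t| ≤ 1 := abs_le.2 ⟨hst.2.1.le, hst.2.2.le⟩
    rw [driftLaplacian_sub hv hv', driftLaplacian_comp_neg, driftLaplacian_gradientBarrier]
    linarith [(abs_le.1 (hL s t hs ht)).1, (abs_le.1 (hL (-s) t (by rwa [abs_neg]) ht)).2]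

lemma pdx_zero_le {v : ℝ → ℝ → ℝ} (hv : ContDiff ℝ 2 (uncurry v)) {M N : ℝ}
    (hN : 0 < N) (hM : ∀ x y, |x| ≤ 1 → |y| ≤ 1 → |v x y| ≤ M)
    (hL : ∀ x y, |x| ≤ 1 → |y| ≤ 1 → |driftLaplacian 0 v x y| ≤ N) :
    pdx v 0 0 ≤ 2 * M + N := by
  have hM0 : 0 ≤ M := (abs_nonneg _).trans (hM 0 0 (by simp) (by simp))
  have hvx : HasDerivAt (fun x => v x 0) (pdx v 0 0) 0 :=
    hasDerivAt_pdx (hv.differentiable (by simp)) 0 0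
  have hodd : HasDerivAt (fun x => v x 0 - v (-x) 0) (2 * pdx v 0 0) 0 := by
    have hneg : HasDerivAt (fun x => v (-x) 0) (-pdx v 0 0) 0 := by
      have hvx' : HasDerivAt (fun x => v x 0) (pdx v 0 0) (-0) := by rwa [neg_zero]
      exact (hvx'.scomp 0 (hasDerivAt_neg 0)).congr_deriv (by simp)
    exact (hvx.sub hneg).congr_deriv (by ring)
  have hslope := (hasDerivWithinAt_iff_tendsto_slope' self_notMem_Ioi).1
    (hodd.hasDerivWithinAt (s := Ioi 0))
  have hle : 2 * pdx v 0 0 ≤ 4 * M + 2 * N := by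
    refine le_of_tendsto hslope ?_
    filter_upwards [Ioc_mem_nhdsGT one_pos] with x hx
    rw [slope_def_field, neg_zero, sub_self, sub_zero, sub_zero, div_le_iff₀ hx.1]
    exact (sub_comp_neg_le_gradientBarrier hv hN hM hL ⟨hx.1.le, hx.2⟩).trans
      (gradientBarrier_le_mul hM0 hN.le)
  linarith

lemma abs_pdx_zero_le {v : ℝ → ℝ → ℝ} (hv : ContDiff ℝ 2 (uncurry v)) {M N : ℝ}
    (hM : ∀ x y, |x| ≤ 1 → |y| ≤ 1 → |v x y| ≤ M)
    (hL : ∀ x y, |x| ≤ 1 → |y| ≤ 1 → |driftLaplacian 0 v x y| ≤ N) :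
    |pdx v 0 0| ≤ 2 * M + N := by
  have hN : 0 ≤ N := (abs_nonneg _).trans (hL 0 0 (by simp) (by simp))
  refine le_of_forall_pos_le_add fun ε hε => abs_le.2 ⟨?_, ?_⟩
  · have hneg := pdx_zero_le (v := fun x y => v (-x) y)
      (hv.comp (by fun_prop : ContDiff ℝ 2 fun p : ℝ × ℝ => (-p.1, p.2)))
      (by positivity : 0 < N + ε) (fun x y hx hy => hM (-x) y (by rwa [abs_neg]) hy)
      fun x y hx hy => by
        rw [driftLaplacian_comp_neg]
        linarith [hL (-x) y (by rwa [abs_neg]) hy]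
    rw [pdx_comp_neg, neg_zero] at hneg
    linarith
  · linarith [pdx_zero_le hv (by positivity : 0 < N + ε) hM
      fun x y hx hy => (hL x y hx hy).trans (by linarith)]

lemma abs_pdy_zero_le {v : ℝ → ℝ → ℝ} (hv : ContDiff ℝ 2 (uncurry v)) {M N : ℝ}
    (hM : ∀ x y, |x| ≤ 1 → |y| ≤ 1 → |v x y| ≤ M)
    (hL : ∀ x y, |x| ≤ 1 → |y| ≤ 1 → |driftLaplacian 0 v x y| ≤ N) :
    |pdy v 0 0| ≤ 2 * M + N := by
  have hswap (x y : ℝ) : driftLaplacian 0 (flip v) x y = driftLaplacian 0 v y x := by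
    simp only [driftLaplacian, zero_mul, add_zero]
    exact add_comm _ _
  exact abs_pdx_zero_le (v := flip v) (hv.comp (contDiff_snd.prodMk contDiff_fst))
    (fun x y hx hy => hM y x hy hx)
    fun x y hx hy => (hswap x y).symm ▸ hL y x hy hx

lemma abs_driftGauge_le {f : ℝ → ℝ → ℝ} {c x₀ y₀ A : ℝ}
    (hf : ∀ x y, |x - x₀| ≤ 1 → |y - y₀| ≤ 1 → |f x y| ≤ A) (x y : ℝ) (hx : |x| ≤ 1)
    (hy : |y| ≤ 1) : |driftGauge c x₀ y₀ f x y| ≤ exp (|c| / 2) * A := by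
  have hcy : c / 2 * y ≤ |c| / 2 := by
    calc c / 2 * y ≤ |c / 2| * |y| := (le_abs_self _).trans (abs_mul _ _).le
      _ ≤ |c| / 2 * 1 := by rw [abs_div, abs_two]; gcongr
      _ = |c| / 2 := mul_one _
  rw [driftGauge, abs_mul, abs_exp]
  exact mul_le_mul (exp_le_exp.2 hcy) (hf _ _ (by simpa) (by simpa)) (abs_nonneg _) (exp_pos _).le

lemma abs_pd_le_of_abs_driftLaplacian_le {v : ℝ → ℝ → ℝ} (hv : ContDiff ℝ 2 (uncurry v))
    {c x₀ y₀ M N : ℝ} (hM : ∀ x y, |x - x₀| ≤ 1 → |y - y₀| ≤ 1 → |v x y| ≤ M)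
    (hN : ∀ x y, |x - x₀| ≤ 1 → |y - y₀| ≤ 1 → |driftLaplacian c v x y| ≤ N) :
    |pdx v x₀ y₀| ≤ 2 * (exp (|c| / 2) * M) + exp (|c| / 2) * (N + c ^ 2 / 4 * M) ∧
      |pdy v x₀ y₀ + c / 2 * v x₀ y₀| ≤
        2 * (exp (|c| / 2) * M) + exp (|c| / 2) * (N + c ^ 2 / 4 * M) := by
  have hsource := abs_driftGauge_le (c := c) (A := N + c ^ 2 / 4 * M)
    (f := fun x y => driftLaplacian c v x y + c ^ 2 / 4 * v x y) fun x y hx hy => by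
      have hcv : |c ^ 2 / 4 * v x y| ≤ c ^ 2 / 4 * M := by
        rw [abs_mul, abs_of_nonneg (by positivity : 0 ≤ c ^ 2 / 4)]
        gcongr
        exact hM x y hx hy
      linarith [abs_add_le (driftLaplacian c v x y) (c ^ 2 / 4 * v x y), hN x y hx hy]
  have hgauge := contDiff_driftGauge hv c x₀ y₀
  have hx := abs_pdx_zero_le hgauge (abs_driftGauge_le hM) fun x y hx hy =>
    (driftLaplacian_driftGauge hv c x₀ y₀ x y).symm ▸ hsource x y hx hy
  have hy := abs_pdy_zero_le hgauge (abs_driftGauge_le hM) fun x y hx hy =>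
    (driftLaplacian_driftGauge hv c x₀ y₀ x y).symm ▸ hsource x y hx hy
  rw [pdx_driftGauge] at hx
  rw [pdy_driftGauge (hv.differentiable (by simp))] at hy
  simp only [driftGauge, mul_zero, exp_zero, one_mul, add_zero] at hx hy
  exact ⟨hx, hy⟩

lemma exists_gradient_bound (c : ℝ) : ∃ C > 0, ∀ v : ℝ → ℝ → ℝ, ContDiff ℝ 2 (uncurry v) →
    ∀ x₀ y₀ M N : ℝ, (∀ x y, |x - x₀| ≤ 1 → |y - y₀| ≤ 1 → |v x y| ≤ M) →
      (∀ x y, |x - x₀| ≤ 1 → |y - y₀| ≤ 1 → |driftLaplacian c v x y| ≤ N) →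
      |pdx v x₀ y₀| ≤ C * (M + N) ∧ |pdy v x₀ y₀| ≤ C * (M + N) := by
  refine ⟨exp (|c| / 2) * (2 + c ^ 2 / 4) + |c| / 2, by positivity,
    fun v hv x₀ y₀ M N hM hN => ?_⟩
  have hMx := hM x₀ y₀ (by simp) (by simp)
  have hM0 : 0 ≤ M := (abs_nonneg _).trans hMx
  have hN0 : 0 ≤ N := (abs_nonneg _).trans (hN x₀ y₀ (by simp) (by simp))
  obtain ⟨hx, hy⟩ := abs_pd_le_of_abs_driftLaplacian_le hv hM hN
  have hle : 2 * (exp (|c| / 2) * M) + exp (|c| / 2) * (N + c ^ 2 / 4 * M) + |c| / 2 * M ≤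
      (exp (|c| / 2) * (2 + c ^ 2 / 4) + |c| / 2) * (M + N) := by
    have hrest : 0 ≤ exp (|c| / 2) * (1 + c ^ 2 / 4) * N + |c| / 2 * N := by positivity
    linarith
  have hcM : 0 ≤ |c| / 2 * M := by positivity
  have hcv : |c / 2 * v x₀ y₀| ≤ |c| / 2 * M := by
    rw [abs_mul, abs_div, abs_two]
    gcongr
  have hsub := abs_sub (pdy v x₀ y₀ + c / 2 * v x₀ y₀) (c / 2 * v x₀ y₀)
  rw [add_sub_cancel_right] at hsub
  exact ⟨by linarith, by linarith⟩

end GradientEstimate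

section StrongMinimumPrinciple

/-- A Gaussian bump centred at `(p, q)`, shifted so as to vanish on the circle of squared
radius `B`: the barrier of the strong minimum principle. -/
noncomputable def gaussianBarrier (m α B p q x y : ℝ) : ℝ :=
  m * (exp (-α * ((x - p) ^ 2 + (y - q) ^ 2)) - exp (-α * B))

lemma contDiff_gaussianBarrier {n : WithTop ℕ∞} (m α B p q : ℝ) :
    ContDiff ℝ n (uncurry (gaussianBarrier m α B p q)) := by
  unfold gaussianBarrier uncurry
  fun_prop

lemma driftLaplacian_gaussianBarrier (c m α B p q x y : ℝ) :
    driftLaplacian c (gaussianBarrier m α B p q) x y =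
      m * exp (-α * ((x - p) ^ 2 + (y - q) ^ 2)) *
        (4 * α ^ 2 * ((x - p) ^ 2 + (y - q) ^ 2) - 4 * α - 2 * α * (c * (y - q))) := by
  have hEx (x y : ℝ) : HasDerivAt (fun t => exp (-α * ((t - p) ^ 2 + (y - q) ^ 2)))
      (exp (-α * ((x - p) ^ 2 + (y - q) ^ 2)) * (-2 * α * (x - p))) x := by
    have h := ((((hasDerivAt_id' x).sub_const p).pow 2).add_const ((y - q) ^ 2)).const_mul (-α)
    exact h.exp.congr_deriv (by simp; ring)
  have hEy (x y : ℝ) : HasDerivAt (fun t => exp (-α * ((x - p) ^ 2 + (t - q) ^ 2)))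
      (exp (-α * ((x - p) ^ 2 + (y - q) ^ 2)) * (-2 * α * (y - q))) y := by
    have h := ((((hasDerivAt_id' y).sub_const q).pow 2).const_add ((x - p) ^ 2)).const_mul (-α)
    exact h.exp.congr_deriv (by simp; ring)
  have hx : pdx (gaussianBarrier m α B p q) = fun x y =>
      m * (exp (-α * ((x - p) ^ 2 + (y - q) ^ 2)) * (-2 * α * (x - p))) :=
    funext₂ fun x y => (((hEx x y).sub_const _).const_mul m).deriv
  have hy : pdy (gaussianBarrier m α B p q) = fun x y =>
      m * (exp (-α * ((x - p) ^ 2 + (y - q) ^ 2)) * (-2 * α * (y - q))) :=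
    funext₂ fun x y => (((hEy x y).sub_const _).const_mul m).deriv
  have hxx := (((hEx x y).mul (((hasDerivAt_id' x).sub_const p).const_mul (-2 * α))).const_mul
    m).deriv
  have hyy := (((hEy x y).mul (((hasDerivAt_id' y).sub_const q).const_mul (-2 * α))).const_mul
    m).deriv
  simp only [driftLaplacian, pdxx, pdyy, hx, hy]
  refine (congrArg₂ (fun a b => a + b + _) hxx hyy).trans ?_
  ring

lemma isCompact_setOf_sq_add_sq_le (p q B : ℝ) :
    IsCompact {z : ℝ × ℝ | (z.1 - p) ^ 2 + (z.2 - q) ^ 2 ≤ B} := by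
  refine (isCompact_closedBall (p, q) (√B)).of_isClosed_subset
    (isClosed_le (by fun_prop) continuous_const) fun z hz => ?_
  have hz : (z.1 - p) ^ 2 + (z.2 - q) ^ 2 ≤ B := hz
  exact max_le (abs_le_sqrt (by linarith [sq_nonneg (z.2 - q)]))
    (abs_le_sqrt (by linarith [sq_nonneg (z.1 - p)]))

variable {w : ℝ → ℝ → ℝ} {c K M : ℝ}

lemma gaussianBarrier_le (hw : ContDiff ℝ 2 (uncurry w)) (hnonneg : ∀ x y, 0 ≤ w x y)
    (hK : 0 ≤ K) (hLw : ∀ x y, driftLaplacian c w x y ≤ K * w x y) {m α A B p q : ℝ}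
    (hm : 0 < m) (hα : 1 ≤ α) (hB : 1 ≤ B) (hαA : 4 + 2 * (|c| * B) + K < 4 * α * A)
    (hnear : ∀ x y, (x - p) ^ 2 + (y - q) ^ 2 < A → m ≤ w x y)
    {x y : ℝ} (hxy : (x - p) ^ 2 + (y - q) ^ 2 ≤ B) :
    gaussianBarrier m α B p q x y ≤ w x y := by
  refine le_of_driftLaplacian_lt (c := c) (contDiff_gaussianBarrier m α B p q) hw
    (isCompact_setOf_sq_add_sq_le p q B) (fun z hz => ?_) (fun z hz hlt => ?_) (x, y) hxy
  · have hzB : (z.1 - p) ^ 2 + (z.2 - q) ^ 2 = B :=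
      frontier_le_subset_eq (f := fun z : ℝ × ℝ => (z.1 - p) ^ 2 + (z.2 - q) ^ 2)
        (by fun_prop) continuous_const hz
    rw [gaussianBarrier, hzB, sub_self, mul_zero]
    exact hnonneg _ _
  have hzB : (z.1 - p) ^ 2 + (z.2 - q) ^ 2 ≤ B :=
    interior_subset (s := {z : ℝ × ℝ | (z.1 - p) ^ 2 + (z.2 - q) ^ 2 ≤ B}) hz
  set r := (z.1 - p) ^ 2 + (z.2 - q) ^ 2 with hr
  have hr0 : 0 ≤ r := by positivity
  have hwE : w z.1 z.2 < m * exp (-α * r) := by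
    refine hlt.trans ?_
    rw [gaussianBarrier, ← hr, mul_sub]
    exact sub_lt_self _ (by positivity)
  have hAr : A ≤ r := by
    by_contra! h
    have hE : exp (-α * r) ≤ 1 := exp_le_one_iff.2 (by nlinarith [hr0])
    linarith [hnear z.1 z.2 h, mul_le_of_le_one_right hm.le hE]
  have hcoeff : K < 4 * α ^ 2 * r - 4 * α - 2 * α * (c * (z.2 - q)) := by
    have hzq : |z.2 - q| ≤ B := abs_le_of_sq_le_sq
      (by nlinarith [sq_nonneg (z.1 - p)]) (by linarith)
    have hcz : c * (z.2 - q) ≤ |c| * B := (le_abs_self _).trans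
      ((abs_mul _ _).trans_le (mul_le_mul_of_nonneg_left hzq (abs_nonneg c)))
    have hα0 : 0 < α := by linarith
    have hαr : α * (4 * α * A) ≤ α * (4 * α * r) := by gcongr
    linarith [mul_lt_mul_of_pos_left hαA hα0, mul_le_mul_of_nonneg_left hcz hα0.le,
      mul_le_mul_of_nonneg_right hα hK]
  rw [driftLaplacian_gaussianBarrier, ← hr]
  calc driftLaplacian c w z.1 z.2 ≤ K * w z.1 z.2 := hLw _ _
    _ ≤ m * exp (-α * r) * K := by
      rw [mul_comm]
      gcongr
    _ < _ := by gcongr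

lemma abs_sub_le_of_abs_pd_le (hw : Differentiable ℝ (uncurry w)) (hx : ∀ x y, |pdx w x y| ≤ M)
    (hy : ∀ x y, |pdy w x y| ≤ M) (x y p q : ℝ) :
    |w x y - w p q| ≤ M * |x - p| + M * |y - q| := by
  have hxw : |w x q - w p q| ≤ M * |x - p| :=
    convex_univ.norm_image_sub_le_of_norm_deriv_le (f := fun t => w t q) (𝕜 := ℝ)
      (fun t _ => (hasDerivAt_pdx hw t q).differentiableAt) (fun t _ => hx t q) trivial trivial
  have hyw : |w x y - w x q| ≤ M * |y - q| :=
    convex_univ.norm_image_sub_le_of_norm_deriv_le (f := w x) (𝕜 := ℝ)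
      (fun t _ => (hasDerivAt_pdy hw x t).differentiableAt) (fun t _ => hy x t) trivial trivial
  linarith [abs_sub_le (w x y) (w x q) (w p q)]

lemma half_le_of_sq_add_sq_lt (hw : Differentiable ℝ (uncurry w)) (hM : 0 < M)
    {δ : ℝ} (hδ : 0 ≤ δ) (hwx : ∀ x y, |pdx w x y| ≤ M) (hwy : ∀ x y, |pdy w x y| ≤ M)
    {x y p q : ℝ} (hpq : δ ≤ w p q) (hxy : (x - p) ^ 2 + (y - q) ^ 2 < (δ / (4 * M)) ^ 2) :
    δ / 2 ≤ w x y := by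
  have hd : 0 ≤ δ / (4 * M) := by positivity
  have hxp : |x - p| ≤ δ / (4 * M) := abs_le_of_sq_le_sq (by linarith [sq_nonneg (y - q)]) hd
  have hyq : |y - q| ≤ δ / (4 * M) := abs_le_of_sq_le_sq (by linarith [sq_nonneg (x - p)]) hd
  have hMδ : M * (δ / (4 * M)) = δ / 4 := by field_simp
  have hlip := abs_sub_le_of_abs_pd_le hw hwx hwy x y p q
  linarith [neg_abs_le (w x y - w p q), mul_le_mul_of_nonneg_left hxp hM.le,
    mul_le_mul_of_nonneg_left hyq hM.le]

/-- Were `w` large at some `(x, y)` of the square, it would stay large on a disc around `(x, y)` by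
the gradient bound, and a Gaussian barrier would propagate this to `(x₀, y₀)`. -/
lemma exists_pos_forall_le_of_driftLaplacian_le (c : ℝ) {K M δ R : ℝ} (hK : 0 ≤ K) (hM : 0 < M)
    (hδ : 0 < δ) : ∃ ε > 0, ∀ w : ℝ → ℝ → ℝ, ContDiff ℝ 2 (uncurry w) → (∀ x y, 0 ≤ w x y) →
      (∀ x y, driftLaplacian c w x y ≤ K * w x y) →
      (∀ x y, |pdx w x y| ≤ M) → (∀ x y, |pdy w x y| ≤ M) →
      ∀ x₀ y₀, w x₀ y₀ < ε → ∀ x y, |x - x₀| ≤ R → |y - y₀| ≤ R → w x y ≤ δ := by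
  set B : ℝ := 2 * R ^ 2 + 1 with hB
  have hB1 : 1 ≤ B := by linarith [sq_nonneg R, hB]
  set A : ℝ := (δ / (4 * M)) ^ 2
  have hA0 : 0 < A := by positivity
  obtain ⟨α, hα, hαA⟩ : ∃ α : ℝ, 1 ≤ α ∧ (4 + 2 * (|c| * B) + K) / (4 * A) < α :=
    ((eventually_ge_atTop 1).and (eventually_gt_atTop _)).exists
  have hαA' : 4 + 2 * (|c| * B) + K < 4 * α * A := by
    rw [div_lt_iff₀ (mul_pos four_pos hA0)] at hαA
    linarith
  have hε : exp (-α * B) < exp (-α * (2 * R ^ 2)) := exp_lt_exp.2 (by nlinarith [hB])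
  refine ⟨δ / 2 * (exp (-α * (2 * R ^ 2)) - exp (-α * B)), mul_pos (half_pos hδ) (sub_pos.2 hε),
    fun w hw hnonneg hLw hwx hwy x₀ y₀ hsmall p q hp hq => ?_⟩
  by_contra! hbig
  have hnear (x y : ℝ) (hxy : (x - p) ^ 2 + (y - q) ^ 2 < A) : δ / 2 ≤ w x y :=
    half_le_of_sq_add_sq_lt (hw.differentiable (by simp)) hM hδ.le hwx hwy hbig.le hxy
  have hdist : (x₀ - p) ^ 2 + (y₀ - q) ^ 2 ≤ 2 * R ^ 2 := by
    have hp2 := sq_le_sq' (neg_le_of_abs_le hp) (le_of_abs_le hp)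
    have hq2 := sq_le_sq' (neg_le_of_abs_le hq) (le_of_abs_le hq)
    linarith [sq_nonneg R]
  have hle : gaussianBarrier (δ / 2) α B p q x₀ y₀ ≤ w x₀ y₀ := gaussianBarrier_le hw hnonneg hK
    hLw (half_pos hδ) hα hB1 hαA' hnear (hdist.trans (by linarith))
  have hE : exp (-α * (2 * R ^ 2)) ≤ exp (-α * ((x₀ - p) ^ 2 + (y₀ - q) ^ 2)) :=
    exp_le_exp.2 (by nlinarith)
  refine hsmall.not_ge (le_trans ?_ hle)
  rw [gaussianBarrier]
  gcongr

end StrongMinimumPrinciple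

section ApproximateProfiles

/-- A potential on `[-1, 1]` with a single barrier at `0` and unequal values at the endpoints, the
higher one at `1`. Unlike in `UnbalancedDoubleWell`, the wells at `±1` may be degenerate. -/
structure IsUnbalancedPotential (F : ℝ → ℝ) : Prop where
  contDiff : ContDiff ℝ 2 F
  deriv_pos : ∀ s ∈ Ioo (-1 : ℝ) 0, 0 < deriv F s
  deriv_neg : ∀ s ∈ Ioo (0 : ℝ) 1, deriv F s < 0
  lt : F (-1) < F 1

lemma UnbalancedDoubleWell.isUnbalancedPotential {F : ℝ → ℝ} (hF : UnbalancedDoubleWell F) :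
    IsUnbalancedPotential F := by
  obtain ⟨hF3, -, -, -, -, hpos, hneg, hF0, hF1⟩ := hF
  exact ⟨hF3.of_le (by norm_num), hpos, hneg, hF0.trans_lt hF1⟩

namespace IsUnbalancedPotential

variable {F : ℝ → ℝ}

lemma continuous_deriv (hF : IsUnbalancedPotential F) : Continuous (deriv F) :=
  hF.contDiff.continuous_deriv (by norm_num)

lemma hasDerivAt (hF : IsUnbalancedPotential F) (s : ℝ) : HasDerivAt F (deriv F s) s :=
  (hF.contDiff.differentiable (by simp) s).hasDerivAt

lemma strictAntiOn (hF : IsUnbalancedPotential F) : StrictAntiOn F (Icc 0 1) :=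
  strictAntiOn_of_deriv_neg (convex_Icc _ _) hF.contDiff.continuous.continuousOn
    (by simpa only [interior_Icc] using hF.deriv_neg)

lemma one_lt_zero (hF : IsUnbalancedPotential F) : F 1 < F 0 :=
  hF.strictAntiOn (by simp) (by simp) one_pos

lemma one_le (hF : IsUnbalancedPotential F) {s : ℝ} (hs : s ∈ Icc (0 : ℝ) 1) : F 1 ≤ F s :=
  hF.strictAntiOn.antitoneOn hs (by simp) hs.2

lemma deriv_pos_of_eq (hF : IsUnbalancedPotential F) {s : ℝ} (hs : s ∈ Ico (-1 : ℝ) 1)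
    (h : F s = F 1) : 0 < deriv F s := by
  obtain rfl | hs1 := hs.1.eq_or_lt
  · exact absurd h hF.lt.ne
  · refine hF.deriv_pos s ⟨hs1, ?_⟩
    by_contra! hs0
    exact (hF.strictAntiOn ⟨hs0, hs.2.le⟩ (by simp) hs.2).ne' h

end IsUnbalancedPotential

lemma exists_pos_forall_le_add_mul {X : Type*} [TopologicalSpace X] {S : Set X} {f g : X → ℝ}
    (hS : IsCompact S) (hf : Continuous f) (hg : Continuous g)
    (hfg : ∀ s ∈ S, f s = 0 → 0 < g s) :
    ∃ l > 0, ∃ κ > 0, ∀ s ∈ S, -κ ≤ f s → κ ≤ f s + l * g s := by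
  obtain ⟨a, ha, hfa⟩ : ∃ a, 0 < a ∧ ∀ s ∈ S ∩ g ⁻¹' Iic 0, a ≤ |f s| :=
    (hS.inter_right (isClosed_Iic.preimage hg)).exists_forall_le' hf.abs.continuousOn
      fun s hs => abs_pos.2 fun h => (hfg s hs.1 h).not_ge hs.2
  obtain ⟨b, hb, hgb⟩ : ∃ b, 0 < b ∧ ∀ s ∈ S ∩ (|f ·|) ⁻¹' Iic (a / 2), b ≤ g s :=
    (hS.inter_right (isClosed_Iic.preimage hf.abs)).exists_forall_le' hg.continuousOn
      fun s ⟨hs, (hsa : |f s| ≤ a / 2)⟩ => by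
        by_contra! hgs
        linarith [hfa s ⟨hs, hgs⟩]
  obtain ⟨K, hK⟩ := hS.exists_bound_of_continuousOn hg.continuousOn
  have hl : 0 < a / (4 * (|K| + 1)) := by positivity
  have hlK : a / (4 * (|K| + 1)) * |K| ≤ a / 4 := by
    rw [div_mul_eq_mul_div, div_le_div_iff₀ (by positivity) (by norm_num)]
    linarith
  set l := a / (4 * (|K| + 1))
  refine ⟨l, hl, min (a / 4) (l * b / 2), by positivity, fun s hs hfs => ?_⟩
  have hκa := min_le_left (a / 4) (l * b / 2)
  have hκb := min_le_right (a / 4) (l * b / 2)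
  rcases le_or_gt |f s| (a / 2) with hsmall | hlarge
  · linarith [mul_le_mul_of_nonneg_left (hgb s ⟨hs, hsmall⟩) hl.le]
  · have hfa2 : a / 2 < f s := (lt_abs.1 hlarge).resolve_right (by linarith)
    have hgK : -|K| ≤ g s := neg_le_of_abs_le ((hK s hs).trans (le_abs_self K))
    linarith [mul_le_mul_of_nonneg_left hgK hl.le]

lemma mul_sub_le_integral {f : ℝ → ℝ} {a b C : ℝ} (hab : a ≤ b) (hf : Continuous f)
    (hC : ∀ x ∈ Icc a b, C ≤ f x) : C * (b - a) ≤ ∫ x in a..b, f x := by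
  simpa [mul_comm] using intervalIntegral.integral_mono_on (μ := volume) hab
    (intervalIntegrable_const (c := C)) (hf.intervalIntegrable a b) hC

lemma mul_le_one_of_forall_sq_le_deriv_sq {U : ℝ → ℝ} {m R : ℝ} (hU : ContDiff ℝ 1 U)
    (h0 : U 0 = 0) (h1 : ∀ x, U x ≤ 1) (hm : 0 < m) (hR : 0 ≤ R) (hd : 0 ≤ deriv U 0)
    (h : ∀ x ∈ Icc 0 R, 0 ≤ U x → m ^ 2 ≤ deriv U x ^ 2) : m * R ≤ 1 := by
  have hU' : Continuous (deriv U) := hU.continuous_deriv le_rfl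
  have hderiv : ∀ x ∈ Icc 0 R, 0 ≤ U x → 0 ≤ deriv U x → m ≤ deriv U x := fun x hx hUx hdx =>
    le_of_sq_le_sq (h x hx hUx) hdx
  have hgrow : Icc 0 R ⊆ {x | 0 ≤ U x ∧ m ≤ deriv U x} := by
    have hclosed : IsClosed {x | 0 ≤ U x ∧ m ≤ deriv U x} :=
      (isClosed_le continuous_const hU.continuous).inter (isClosed_le continuous_const hU')
    refine (hclosed.inter isClosed_Icc).Icc_subset_of_forall_mem_nhdsWithin
      ⟨h0.ge, hderiv 0 (left_mem_Icc.2 hR) h0.ge hd⟩ fun x ⟨⟨hUx, hdx⟩, hx⟩ => ?_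
    obtain ⟨z, hxz, hz⟩ := mem_nhdsGE_iff_exists_Icc_subset.1 (mem_nhdsWithin_of_mem_nhds
      (hU'.continuousAt.eventually (lt_mem_nhds (hm.trans_le hdx))))
    have hmono : MonotoneOn U (Icc x z) := monotoneOn_of_deriv_nonneg (convex_Icc x z)
      hU.continuous.continuousOn (hU.differentiable (by simp)).differentiableOn
      fun t ht => (hz (interior_subset ht)).le
    filter_upwards [Ioo_mem_nhdsGT (lt_min hxz hx.2)] with t ht
    have htz : t ∈ Icc x z := ⟨ht.1.le, ht.2.le.trans (min_le_left _ _)⟩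
    have hUt : 0 ≤ U t := hUx.trans (hmono (left_mem_Icc.2 hxz.le) htz ht.1.le)
    exact ⟨hUt, hderiv t ⟨hx.1.trans ht.1.le, ht.2.le.trans (min_le_right _ _)⟩ hUt (hz htz).le⟩
  have hle := (convex_Icc 0 R).mul_sub_le_image_sub_of_le_deriv hU.continuous.continuousOn
    (hU.differentiable (by simp)).differentiableOn (C := m)
    (fun x hx => (hgrow (interior_subset hx)).2) 0 (left_mem_Icc.2 hR) R (right_mem_Icc.2 hR) hR
  linarith [h1 R]

/-- `U` is a bounded solution of the profile equation `U'' = F'(U)` through `0`, up to an error `δ`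
on `[-R, R]`. -/
structure IsApproxProfile (F : ℝ → ℝ) (M δ R : ℝ) (U : ℝ → ℝ) : Prop where
  contDiff : ContDiff ℝ 2 U
  abs_le_one : ∀ x, |U x| ≤ 1
  abs_deriv_le : ∀ x, |deriv U x| ≤ M
  map_zero : U 0 = 0
  abs_residual_le : ∀ x, |x| ≤ R → |deriv (deriv U) x - deriv F (U x)| ≤ δ

/-- The first integral of the profile equation `U'' = F'(U)`, normalised at the state `1`. -/
noncomputable def hamiltonian (F U : ℝ → ℝ) (x : ℝ) : ℝ :=
  deriv U x ^ 2 / 2 - (F (U x) - F 1)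

/-- The energy density of a profile `U` relative to the state `1`. -/
noncomputable def energyDensity (F U : ℝ → ℝ) (x : ℝ) : ℝ :=
  F (U x) - F 1 + deriv U x ^ 2 / 2

lemma continuous_energyDensity {F U : ℝ → ℝ} (hF : Continuous F) (hU : ContDiff ℝ 1 U) :
    Continuous (energyDensity F U) :=
  ((hF.comp hU.continuous).sub continuous_const).add
    (((hU.continuous_deriv le_rfl).pow 2).div_const 2)

lemma energyDensity_comp_neg (F U : ℝ → ℝ) (x : ℝ) :
    energyDensity F (fun x => U (-x)) x = energyDensity F U (-x) := by
  simp only [energyDensity, deriv_comp_neg, neg_sq]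

lemma energyDensity_comp_const_add (F U : ℝ → ℝ) (a x : ℝ) :
    energyDensity F (fun x => U (a + x)) x = energyDensity F U (a + x) := by
  simp only [energyDensity, deriv_comp_const_add]

namespace IsApproxProfile

variable {F U : ℝ → ℝ} {M δ R : ℝ}

lemma mono {δ' R' : ℝ} (hU : IsApproxProfile F M δ R U) (hδ : δ ≤ δ') (hR : R' ≤ R) :
    IsApproxProfile F M δ' R' U :=
  { hU with abs_residual_le := fun x hx => (hU.abs_residual_le x (hx.trans hR)).trans hδ }

lemma comp_neg (hU : IsApproxProfile F M δ R U) : IsApproxProfile F M δ R fun x => U (-x) where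
  contDiff := hU.contDiff.comp contDiff_neg
  abs_le_one x := hU.abs_le_one (-x)
  abs_deriv_le x := by simpa only [deriv_comp_neg, abs_neg] using hU.abs_deriv_le (-x)
  map_zero := by simpa only [neg_zero] using hU.map_zero
  abs_residual_le x hx := by
    have hd : deriv (fun x => U (-x)) = fun x => -deriv U (-x) := funext (deriv_comp_neg U)
    rw [hd, deriv.fun_neg, deriv_comp_neg (deriv U), neg_neg]
    exact hU.abs_residual_le (-x) (by rwa [abs_neg])

lemma differentiable (hU : IsApproxProfile F M δ R U) : Differentiable ℝ U :=
  hU.contDiff.differentiable (by simp)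

lemma contDiff_deriv (hU : IsApproxProfile F M δ R U) : ContDiff ℝ 1 (deriv U) :=
  (contDiff_succ_iff_deriv (n := 1).1 (by simpa [one_add_one_eq_two] using hU.contDiff)).2.2

lemma hasDerivAt_deriv (hU : IsApproxProfile F M δ R U) (x : ℝ) :
    HasDerivAt (deriv U) (deriv (deriv U) x) x :=
  (hU.contDiff_deriv.differentiable (by simp) x).hasDerivAt

lemma bound_nonneg (hU : IsApproxProfile F M δ R U) : 0 ≤ M :=
  (abs_nonneg _).trans (hU.abs_deriv_le 0)

lemma abs_le_mul (hU : IsApproxProfile F M δ R U) (x : ℝ) : |U x| ≤ M * |x| := by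
  simpa [hU.map_zero] using convex_univ.norm_image_sub_le_of_norm_deriv_le (f := U) (𝕜 := ℝ)
    (fun t _ => hU.differentiable t) (fun t _ => hU.abs_deriv_le t) (mem_univ 0) (mem_univ x)

lemma continuous_energyDensity (hF : Continuous F) (hU : IsApproxProfile F M δ R U) :
    Continuous (energyDensity F U) :=
  _root_.continuous_energyDensity hF (hU.contDiff.of_le (by norm_num))

lemma hasDerivAt_hamiltonian (hF : IsUnbalancedPotential F) (hU : IsApproxProfile F M δ R U)
    (x : ℝ) :
    HasDerivAt (hamiltonian F U) (deriv U x * (deriv (deriv U) x - deriv F (U x))) x :=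
  ((((hU.hasDerivAt_deriv x).pow 2).div_const 2).sub
    (((hF.hasDerivAt (U x)).comp x (hU.differentiable x).hasDerivAt).sub_const (F 1))).congr_deriv
    (by simp only [Nat.cast_ofNat, Nat.add_one_sub_one, pow_one]; ring)

lemma abs_hamiltonian_sub_le (hF : IsUnbalancedPotential F) (hU : IsApproxProfile F M δ R U)
    {x : ℝ} (hx : |x| ≤ R) : |hamiltonian F U x - hamiltonian F U 0| ≤ M * δ * R := by
  have hR : 0 ≤ R := (abs_nonneg x).trans hx
  have hδ : 0 ≤ δ := (abs_nonneg _).trans (hU.abs_residual_le x hx)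
  have hlip := (convex_Icc (-R) R).norm_image_sub_le_of_norm_hasDerivWithin_le (C := M * δ)
    (fun t _ => (hU.hasDerivAt_hamiltonian hF t).hasDerivWithinAt)
    (fun t ht => by
      rw [norm_mul]
      exact mul_le_mul (hU.abs_deriv_le t) (hU.abs_residual_le t (abs_le.2 ht)) (abs_nonneg _)
        hU.bound_nonneg)
    (show (0 : ℝ) ∈ Icc (-R) R by simpa) (abs_le.1 hx)
  rw [sub_zero] at hlip
  exact hlip.trans (mul_le_mul_of_nonneg_left hx (mul_nonneg hU.bound_nonneg hδ))

lemma hamiltonian_zero_le_of_deriv_nonneg (hF : IsUnbalancedPotential F)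
    (hU : IsApproxProfile F M δ R U) {m : ℝ} (hm : 0 < m) (hR : 0 ≤ R) (hmR : 1 < m * R)
    (hd : 0 ≤ deriv U 0) : hamiltonian F U 0 ≤ m ^ 2 / 2 + M * δ * R := by
  by_contra! hgt
  refine hmR.not_ge (mul_le_one_of_forall_sq_le_deriv_sq (hU.contDiff.of_le (by norm_num))
    hU.map_zero (fun x => (abs_le.1 (hU.abs_le_one x)).2) hm hR hd fun x hx hUx => ?_)
  have hH := neg_le_of_abs_le (hU.abs_hamiltonian_sub_le hF (x := x)
    (by rw [abs_of_nonneg hx.1]; exact hx.2))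
  have hF1 : F 1 ≤ F (U x) := hF.one_le ⟨hUx, (abs_le.1 (hU.abs_le_one x)).2⟩
  rw [hamiltonian] at hH
  linarith

lemma hamiltonian_zero_le (hF : IsUnbalancedPotential F) (hU : IsApproxProfile F M δ R U) {m : ℝ}
    (hm : 0 < m) (hR : 0 ≤ R) (hmR : 1 < m * R) :
    hamiltonian F U 0 ≤ m ^ 2 / 2 + M * δ * R := by
  rcases le_total 0 (deriv U 0) with hd | hd
  · exact hU.hamiltonian_zero_le_of_deriv_nonneg hF hm hR hmR hd
  · simpa [hamiltonian, deriv_comp_neg] using hU.comp_neg.hamiltonian_zero_le_of_deriv_nonneg hF hm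
      hR hmR (by simpa [deriv_comp_neg] using hd)

lemma sub_le_integral_energyDensity (hF : IsUnbalancedPotential F)
    (hU : IsApproxProfile F M δ R U) {ρ γ η b : ℝ} (hρ : 0 ≤ ρ) (hη : 0 ≤ η)
    (hgain : ∀ x, |x| ≤ ρ → U x ≤ 1 / 2 ∧ γ ≤ F (U x) - F 1)
    (hlow : ∀ x, |x| ≤ R → -η ≤ F (U x) - F 1) (hb : b ∈ Icc 0 R) (hUb : 1 / 2 < U b) :
    γ * ρ - η * b ≤ ∫ x in (0)..b, energyDensity F U x := by
  have hρb : ρ ≤ b := by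
    by_contra! hbρ
    exact hUb.not_ge (hgain b (by rw [abs_of_nonneg hb.1]; exact hbρ.le)).1
  have hcont := hU.continuous_energyDensity hF.contDiff.continuous
  have hle {x C : ℝ} (h : C ≤ F (U x) - F 1) : C ≤ energyDensity F U x :=
    h.trans (le_add_of_nonneg_right (by positivity))
  have hleft := mul_sub_le_integral hρ hcont fun x hx =>
    hle (hgain x (by rw [abs_of_nonneg hx.1]; exact hx.2)).2
  have hright := mul_sub_le_integral hρb hcont fun x hx =>
    hle (hlow x (abs_le.2 ⟨by linarith [hx.1, hb.1, hb.2], hx.2.trans hb.2⟩))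
  rw [← intervalIntegral.integral_add_adjacent_intervals (hcont.intervalIntegrable 0 ρ)
    (hcont.intervalIntegrable ρ b)]
  linarith [mul_nonneg hη hρ]

/-- The multiple `l * F'(U)` is traded for `l * U''`, whose integral is bounded by `2 * l * M`. -/
lemma sub_le_integral_energyDensity_of_le_add_mul (hF : IsUnbalancedPotential F)
    (hU : IsApproxProfile F M δ R U) {κ l b : ℝ} (hl : 0 ≤ l) (hb : 0 ≤ b) (hbR : b ≤ R)
    (hκ : ∀ x ∈ Icc 0 b, κ ≤ F (U x) - F 1 + l * deriv F (U x)) :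
    (κ - l * δ) * b - 2 * l * M ≤ ∫ x in (0)..b, energyDensity F U x := by
  have hcont := hU.continuous_energyDensity hF.contDiff.continuous
  have hcont' : Continuous fun x => l * deriv (deriv U) x :=
    (hU.contDiff_deriv.continuous_deriv le_rfl).const_mul l
  have hle := mul_sub_le_integral (C := κ - l * δ) hb (hcont.add hcont') fun x hx => by
    have hres := neg_le_of_abs_le (hU.abs_residual_le x (abs_le.2 ⟨by linarith [hx.1],
      hx.2.trans hbR⟩))
    rw [Pi.add_apply, energyDensity]
    linarith [hκ x hx, mul_le_mul_of_nonneg_left hres hl, sq_nonneg (deriv U x)]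
  have hFTC : ∫ x in (0)..b, deriv (deriv U) x = deriv U b - deriv U 0 :=
    intervalIntegral.integral_deriv_eq_sub (fun x _ => (hU.hasDerivAt_deriv x).differentiableAt)
      ((hU.contDiff_deriv.continuous_deriv le_rfl).intervalIntegrable 0 b)
  have h0 := mul_le_mul_of_nonneg_left (neg_le_of_abs_le (hU.abs_deriv_le 0)) hl
  have hb' := mul_le_mul_of_nonneg_left (le_of_abs_le (hU.abs_deriv_le b)) hl
  simp only [Pi.add_apply] at hle
  rw [intervalIntegral.integral_add (hcont.intervalIntegrable 0 b)
    (hcont'.intervalIntegrable 0 b), intervalIntegral.integral_const_mul, hFTC] at hle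
  linarith

end IsApproxProfile

namespace IsUnbalancedPotential

variable {F : ℝ → ℝ} {M : ℝ}

lemma exists_forall_neg_le_potential (hF : IsUnbalancedPotential F) (hM : 0 < M) {η : ℝ}
    (hη : 0 < η) (R₁ : ℝ) : ∃ R ≥ R₁, 0 < R ∧ ∃ δ > 0, ∀ U, IsApproxProfile F M δ R U →
      ∀ x, |x| ≤ R → -η ≤ F (U x) - F 1 := by
  have hm : 0 < √η := sqrt_pos.2 hη
  set R := max R₁ (2 / √η)
  have hR : 0 < R := lt_max_of_lt_right (by positivity)
  have hmR : 1 < √η * R := by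
    have hle := mul_le_mul_of_nonneg_left (le_max_right R₁ (2 / √η)) hm.le
    rw [mul_div_cancel₀ _ hm.ne'] at hle
    linarith
  refine ⟨R, le_max_left _ _, hR, η / (4 * (M * R)), by positivity, fun U hU x hx => ?_⟩
  have hδ : M * (η / (4 * (M * R))) * R = η / 4 := by field_simp
  have h0 := hU.hamiltonian_zero_le hF hm hR.le hmR
  have hx' := le_of_abs_le (hU.abs_hamiltonian_sub_le hF hx)
  rw [sq_sqrt hη.le] at h0
  rw [hamiltonian] at hx'
  linarith [sq_nonneg (deriv U x)]

lemma exists_initial_gain (hF : IsUnbalancedPotential F) (hM : 0 < M) :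
    ∃ ρ > 0, ∃ γ > 0, ∀ {δ R : ℝ} {U : ℝ → ℝ}, IsApproxProfile F M δ R U →
      ∀ x, |x| ≤ ρ → U x ≤ 1 / 2 ∧ γ ≤ F (U x) - F 1 := by
  obtain ⟨r, hr, hrF⟩ : ∃ r > 0, ∀ s, |s| < r → (F 1 + F 0) / 2 < F s := by
    simpa [dist_eq] using Metric.eventually_nhds_iff.1
      (hF.contDiff.continuous.continuousAt.eventually
        (lt_mem_nhds (show (F 1 + F 0) / 2 < F 0 by linarith [hF.one_lt_zero])))
  have hmin : 0 < min r 1 := lt_min hr one_pos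
  refine ⟨min r 1 / (2 * M), div_pos hmin (mul_pos two_pos hM), (F 0 - F 1) / 2,
    half_pos (sub_pos.2 hF.one_lt_zero), fun {δ R U} hU x hx => ?_⟩
  have hUx : |U x| ≤ min r 1 / 2 := (hU.abs_le_mul x).trans <| by
    calc M * |x| ≤ M * (min r 1 / (2 * M)) := by gcongr
      _ = min r 1 / 2 := by field_simp
  refine ⟨by linarith [le_abs_self (U x), min_le_right r 1], ?_⟩
  linarith [hrF (U x) (by linarith [min_le_left r 1])]

/-- Either the profile comes close to `1` within a bounded distance, and then the gain near `0`
dominates; or it stays away from `1` and the energy grows linearly. -/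
lemma exists_right_energy_gain (hF : IsUnbalancedPotential F) (hM : 0 < M) :
    ∃ κ > 0, ∃ R > 0, ∃ δ > 0, ∀ U, IsApproxProfile F M δ R U →
      ∃ b ∈ Icc 0 R, κ + M * (1 - U b) ≤ ∫ x in (0)..b, energyDensity F U x := by
  obtain ⟨ρ, hρ, γ, hγ, hinit⟩ := hF.exists_initial_gain hM
  set κ := γ * ρ / 4 with hκ
  have hκ0 : 0 < κ := by positivity
  obtain ⟨σ, hσ, hσ2, hMσ⟩ : ∃ σ > 0, σ ≤ 1 / 2 ∧ M * σ ≤ κ :=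
    ⟨min (1 / 2) (κ / M), by positivity, min_le_left _ _,
      (le_div_iff₀' hM).1 (min_le_right _ _)⟩
  obtain ⟨l, hl, κ₀, hκ₀, hcoer⟩ := exists_pos_forall_le_add_mul
    (isCompact_Icc (a := -1) (b := 1 - σ)) (hF.contDiff.continuous.sub continuous_const)
    hF.continuous_deriv fun s hs h => hF.deriv_pos_of_eq ⟨hs.1, by linarith [hs.2]⟩
      (sub_eq_zero.1 h)
  set R₁ := 2 * (2 * l * M + 2 * M + κ) / κ₀
  have hR₁0 : 0 < R₁ := by positivity
  have hκR : κ₀ * R₁ = 2 * (2 * l * M + 2 * M + κ) := mul_div_cancel₀ _ hκ₀.ne'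
  obtain ⟨η, hη, hηκ, hηR⟩ : ∃ η > 0, η ≤ κ₀ ∧ η * R₁ ≤ 2 * κ :=
    ⟨min κ₀ (2 * κ / R₁), by positivity, min_le_left _ _,
      (le_div_iff₀ hR₁0).1 (min_le_right _ _)⟩
  obtain ⟨R, hR₁R, hR, δ₁, hδ₁, hlow⟩ := hF.exists_forall_neg_le_potential hM hη R₁
  obtain ⟨δ, hδ, hδδ₁, hlδ⟩ : ∃ δ > 0, δ ≤ δ₁ ∧ l * δ ≤ κ₀ / 2 :=
    ⟨min δ₁ (κ₀ / 2 / l), by positivity, min_le_left _ _, (le_div_iff₀' hl).1 (min_le_right _ _)⟩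
  refine ⟨κ, hκ0, R, hR, δ, hδ, fun U hU => ?_⟩
  have hlowU := hlow U (hU.mono hδδ₁ le_rfl)
  by_cases! hnear : ∃ b ∈ Icc 0 R₁, 1 - σ < U b
  · obtain ⟨b, hb, hUb⟩ := hnear
    have hbR : b ∈ Icc 0 R := ⟨hb.1, hb.2.trans hR₁R⟩
    have hgain := hU.sub_le_integral_energyDensity hF hρ.le hη.le (hinit hU) hlowU hbR
      (by linarith)
    have hηb : η * b ≤ η * R₁ := mul_le_mul_of_nonneg_left hb.2 hη.le
    have hMb : M * (1 - U b) ≤ M * σ := mul_le_mul_of_nonneg_left (by linarith) hM.le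
    exact ⟨b, hbR, by linarith⟩
  · have hgain := hU.sub_le_integral_energyDensity_of_le_add_mul hF hl.le hR₁0.le hR₁R
      fun x hx => hcoer (U x) ⟨(abs_le.1 (hU.abs_le_one x)).1, hnear x hx⟩
        ((neg_le_neg hηκ).trans (hlowU x (abs_le.2 ⟨by linarith [hx.1], hx.2.trans hR₁R⟩)))
    have hlδR : l * δ * R₁ ≤ κ₀ / 2 * R₁ := by gcongr
    have hMR := mul_le_mul_of_nonneg_left (neg_le_of_abs_le (hU.abs_le_one R₁)) hM.le
    exact ⟨R₁, ⟨hR₁0.le, hR₁R⟩, by linarith⟩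

lemma exists_energy_gain (hF : IsUnbalancedPotential F) (hM : 0 < M) :
    ∃ κ > 0, ∃ R > 0, ∃ δ > 0, ∀ U, IsApproxProfile F M δ R U → ∃ a ∈ Icc (-R) 0, ∃ b ∈ Icc 0 R,
      κ + M * (1 - U a) + M * (1 - U b) ≤ ∫ x in a..b, energyDensity F U x := by
  obtain ⟨κ, hκ, R, hR, δ, hδ, hgain⟩ := hF.exists_right_energy_gain hM
  refine ⟨κ, hκ, R, hR, δ, hδ, fun U hU => ?_⟩
  obtain ⟨b, hb, hright⟩ := hgain U hU
  obtain ⟨a, ha, hleft⟩ := hgain _ hU.comp_neg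
  simp only [energyDensity_comp_neg F U, intervalIntegral.integral_comp_neg (energyDensity F U),
    neg_zero] at hleft
  have hcont := hU.continuous_energyDensity hF.contDiff.continuous
  refine ⟨-a, ⟨neg_le_neg ha.2, neg_nonpos.2 ha.1⟩, b, hb, ?_⟩
  rw [← intervalIntegral.integral_add_adjacent_intervals (hcont.intervalIntegrable (-a) 0)
    (hcont.intervalIntegrable 0 b)]
  linarith

end IsUnbalancedPotential

end ApproximateProfiles

section EnergyIdentity

variable {F : ℝ → ℝ} {u f g : ℝ → ℝ → ℝ} {c M : ℝ}

lemma integral_pdx_add_pdy (hf : ContDiff ℝ 1 (uncurry f)) (hg : ContDiff ℝ 1 (uncurry g))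
    (a b y₀ Y : ℝ) :
    ∫ x in a..b, ∫ y in y₀..Y, (pdx f x y + pdy g x y) =
      (∫ x in a..b, g x Y) - (∫ x in a..b, g x y₀) + (∫ y in y₀..Y, f b y) -
        ∫ y in y₀..Y, f a y := by
  have hf' : Differentiable ℝ (uncurry f) := hf.differentiable (by simp)
  have hg' : Differentiable ℝ (uncurry g) := hg.differentiable (by simp)
  have hcont : Continuous fun p : ℝ × ℝ =>
      fderiv ℝ (uncurry f) p (1, 0) + fderiv ℝ (uncurry g) p (0, 1) :=
    ((hf.continuous_fderiv (by simp)).clm_apply continuous_const).add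
      ((hg.continuous_fderiv (by simp)).clm_apply continuous_const)
  simp only [pdx_eq_fderiv hf', pdy_eq_fderiv hg']
  exact integral2_divergence_prod_of_hasFDerivAt _ _ _ _ a y₀ b Y
    hf.continuous.continuousOn hg.continuous.continuousOn (fun p _ => (hf' p).hasFDerivAt)
    (fun p _ => (hg' p).hasFDerivAt)
    (hcont.continuousOn.integrableOn_compact (isCompact_uIcc.prod isCompact_uIcc))

lemma abs_integral_mul_deriv_le {f g : ℝ → ℝ} {a b : ℝ} (hg : ContDiff ℝ 1 g)
    (hf : ∀ x, |f x| ≤ M) (hg' : ∀ x, 0 ≤ deriv g x) (hab : a ≤ b) :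
    |∫ x in a..b, f x * deriv g x| ≤ M * (g b - g a) := by
  have hg'c : Continuous (deriv g) := hg.continuous_deriv le_rfl
  have hFTC : ∫ x in a..b, deriv g x = g b - g a :=
    intervalIntegral.integral_deriv_eq_sub (fun x _ => hg.differentiable (by simp) x)
      (hg'c.intervalIntegrable a b)
  rw [← hFTC, ← intervalIntegral.integral_const_mul, ← norm_eq_abs]
  refine intervalIntegral.norm_integral_le_of_norm_le hab
    (.of_forall fun x _ => ?_) ((hg'c.const_mul M).intervalIntegrable a b)
  rw [norm_mul, norm_eq_abs, norm_eq_abs, abs_of_nonneg (hg' x)]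
  exact mul_le_mul_of_nonneg_right (hf x) (hg' x)

/-- The vertical component of the energy flux, whose horizontal component is `u_x u_y`. -/
noncomputable def energyFlux (F : ℝ → ℝ) (u : ℝ → ℝ → ℝ) (x y : ℝ) : ℝ :=
  pdy u x y ^ 2 / 2 - energyDensity F (fun t => u t y) x

lemma contDiff_energyFlux (hF : ContDiff ℝ 1 F) (hu : ContDiff ℝ 2 (uncurry u)) :
    ContDiff ℝ 1 (uncurry (energyFlux F u)) :=
  (((contDiff_pdy hu (by norm_num)).pow 2).div_const 2).sub
    (((hF.comp (hu.of_le (by norm_num))).sub contDiff_const).add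
      (((contDiff_pdx hu (by norm_num)).pow 2).div_const 2))

lemma pdx_mul_add_pdy_energyFlux (hF : Differentiable ℝ F) (hu : ContDiff ℝ 2 (uncurry u))
    (x y : ℝ) :
    pdx (fun x y => pdx u x y * pdy u x y) x y + pdy (energyFlux F u) x y =
      pdy u x y * (pdxx u x y + pdyy u x y - deriv F (u x y)) := by
  have hux : Differentiable ℝ (uncurry (pdx u)) :=
    (contDiff_pdx (m := 1) hu (by norm_num)).differentiable (by simp)
  have huy : Differentiable ℝ (uncurry (pdy u)) :=
    (contDiff_pdy (m := 1) hu (by norm_num)).differentiable (by simp)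
  have hmul : pdx (fun x y => pdx u x y * pdy u x y) x y = _ :=
    ((hasDerivAt_pdx hux x y).mul (hasDerivAt_pdx huy x y)).deriv
  have hFu := ((hF (u x y)).hasDerivAt.comp y
    (hasDerivAt_pdy (hu.differentiable (by simp)) x y)).sub_const (F 1)
  have hflux : pdy (energyFlux F u) x y = _ :=
    ((((hasDerivAt_pdy huy x y).pow 2).div_const 2).sub
      (hFu.add (((hasDerivAt_pdy hux x y).pow 2).div_const 2))).deriv
  rw [hmul, hflux, pdx_pdy_comm hu]
  simp only [pdxx, pdyy, pdx, pdy, Nat.cast_ofNat, Nat.add_one_sub_one, pow_one]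
  ring

lemma integral_energyFlux_add_le (hF : ContDiff ℝ 1 F) (hu : ContDiff ℝ 2 (uncurry u))
    (hc : 0 ≤ c) (heq : ∀ x y, driftLaplacian c u x y = deriv F (u x y)) {a b y₀ Y : ℝ}
    (hab : a ≤ b) (hY : y₀ ≤ Y) :
    (∫ x in a..b, energyFlux F u x Y) + ∫ y in y₀..Y, pdx u b y * pdy u b y ≤
      (∫ x in a..b, energyFlux F u x y₀) + ∫ y in y₀..Y, pdx u a y * pdy u a y := by
  have hdiv (x y : ℝ) : pdx (fun x y => pdx u x y * pdy u x y) x y + pdy (energyFlux F u) x y =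
      -(c * pdy u x y ^ 2) := by
    rw [pdx_mul_add_pdy_energyFlux (hF.differentiable (by simp)) hu, ← heq, driftLaplacian]
    ring
  have hmul : ContDiff ℝ 1 (uncurry fun x y => pdx u x y * pdy u x y) :=
    (contDiff_pdx hu (by norm_num)).mul (contDiff_pdy hu (by norm_num))
  have hint := integral_pdx_add_pdy hmul (contDiff_energyFlux hF hu) a b y₀ Y
  have hnonneg : 0 ≤ ∫ x in a..b, ∫ y in y₀..Y, c * pdy u x y ^ 2 :=
    intervalIntegral.integral_nonneg hab fun x _ =>
      intervalIntegral.integral_nonneg hY fun y _ => by positivity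
  simp only [hdiv, intervalIntegral.integral_neg] at hint
  linarith

lemma tendsto_deriv_zero_of_tendsto_const {ι : Type*} {l : Filter ι} {f : ι → ℝ → ℝ} {a : ℝ}
    (hf : ∀ i, Differentiable ℝ (f i)) (hf' : ∀ i, Differentiable ℝ (deriv (f i)))
    (hM : ∀ i x, |deriv (deriv (f i)) x| ≤ M) (hlim : ∀ x, Tendsto (f · x) l (𝓝 a)) (x : ℝ) :
    Tendsto (fun i => deriv (f i) x) l (𝓝 0) := by
  rw [Metric.tendsto_nhds]
  intro ε hε
  set h := ε / (2 * (|M| + 1)) with hh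
  have hh0 : 0 < h := by positivity
  have hMh : |M| * h < ε / 2 := by
    have : (|M| + 1) * h = ε / 2 := by rw [hh]; field_simp
    linarith
  have hdiff : Tendsto (fun i => f i (x + h) - f i x) l (𝓝 0) := by
    simpa only [sub_self] using (hlim (x + h)).sub (hlim x)
  filter_upwards [Metric.tendsto_nhds.1 hdiff (ε / 2 * h) (by positivity)] with i hi
  rw [dist_zero_right, norm_eq_abs] at hi ⊢
  obtain ⟨ξ, hξ, hslope⟩ := exists_deriv_eq_slope (f i) (lt_add_of_pos_right x hh0)
    (hf i).continuous.continuousOn (hf i).differentiableOn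
  have hξ' : |deriv (f i) ξ| < ε / 2 := by
    rwa [hslope, add_sub_cancel_left, abs_div, abs_of_pos hh0, div_lt_iff₀ hh0]
  have hxξ : |deriv (f i) x - deriv (f i) ξ| ≤ |M| * h := calc
    |deriv (f i) x - deriv (f i) ξ| ≤ |M| * |x - ξ| :=
      convex_univ.norm_image_sub_le_of_norm_deriv_le (𝕜 := ℝ) (fun t _ => hf' i t)
        (fun t _ => (hM i t).trans (le_abs_self M)) (mem_univ ξ) (mem_univ x)
    _ ≤ |M| * h := by
      gcongr
      exact abs_le.2 ⟨by linarith [hξ.2], by linarith [hξ.1]⟩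
  linarith [abs_sub_abs_le_abs_sub (deriv (f i) x) (deriv (f i) ξ)]

end EnergyIdentity

section TravelingWaveEstimates

variable {F : ℝ → ℝ} {u : ℝ → ℝ → ℝ} {c M : ℝ}

/-- `M` bounds all partial derivatives of `u` of order one and two on the whole plane. -/
structure PartialDerivsBoundedBy (u : ℝ → ℝ → ℝ) (M : ℝ) : Prop where
  abs_pdx_le : ∀ x y, |pdx u x y| ≤ M
  abs_pdy_le : ∀ x y, |pdy u x y| ≤ M
  abs_pdxx_le : ∀ x y, |pdxx u x y| ≤ M
  abs_pdx_pdy_le : ∀ x y, |pdx (pdy u) x y| ≤ M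
  abs_pdyy_le : ∀ x y, |pdyy u x y| ≤ M

namespace IsSolution

lemma contDiff (hu : IsSolution F c u) : ContDiff ℝ 3 (uncurry u) := hu.1

lemma contDiff_two (hu : IsSolution F c u) : ContDiff ℝ 2 (uncurry u) :=
  hu.contDiff.of_le (by norm_num)

lemma differentiable (hu : IsSolution F c u) : Differentiable ℝ (uncurry u) :=
  hu.contDiff.differentiable (by simp)

lemma driftLaplacian_eq (hu : IsSolution F c u) (x y : ℝ) :
    driftLaplacian c u x y = deriv F (u x y) := hu.2.1 x y

lemma abs_le_one (hu : IsSolution F c u) (x y : ℝ) : |u x y| ≤ 1 := hu.2.2.1 x y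

lemma pdy_pos (hu : IsSolution F c u) (x y : ℝ) : 0 < pdy u x y := hu.2.2.2 x y

lemma exists_abs_comp_le (hu : IsSolution F c u) {g : ℝ → ℝ} (hg : Continuous g) :
    ∃ K, ∀ x y, |g (u x y)| ≤ K := by
  obtain ⟨K, hK⟩ := isCompact_Icc.exists_bound_of_continuousOn (s := Icc (-1 : ℝ) 1)
    hg.continuousOn
  exact ⟨K, fun x y => hK _ (abs_le.1 (hu.abs_le_one x y))⟩

lemma driftLaplacian_pdy (hF : ContDiff ℝ 2 F) (hu : IsSolution F c u) (x y : ℝ) :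
    driftLaplacian c (pdy u) x y = deriv (deriv F) (u x y) * pdy u x y := by
  have hux : ContDiff ℝ 2 (uncurry (pdx u)) := contDiff_pdx hu.contDiff (by norm_num)
  have huy : ContDiff ℝ 2 (uncurry (pdy u)) := contDiff_pdy hu.contDiff (by norm_num)
  have hcomm : pdx (pdy u) = pdy (pdx u) := funext₂ (pdx_pdy_comm hu.contDiff_two)
  have hxx : HasDerivAt (pdxx u x) (pdxx (pdy u) x y) y := by
    have h := hasDerivAt_pdy ((contDiff_pdx (m := 1) hux (by norm_num)).differentiable (by simp))
      x y
    rwa [← pdx_pdy_comm hux, ← hcomm] at h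
  have hyy : HasDerivAt (pdyy u x) (pdyy (pdy u) x y) y :=
    hasDerivAt_pdy ((contDiff_pdy (m := 1) huy (by norm_num)).differentiable (by simp)) x y
  have hy := hasDerivAt_pdy (huy.differentiable (by simp)) x y
  have hF' : HasDerivAt (deriv F) (deriv (deriv F) (u x y)) (u x y) :=
    ((hF.deriv' (n := 1)).differentiable (by simp) _).hasDerivAt
  have hleft : HasDerivAt (driftLaplacian c u x) (driftLaplacian c (pdy u) x y) y :=
    (hxx.add hyy).add (hy.const_mul c)
  rw [show driftLaplacian c u x = deriv F ∘ u x from funext (hu.driftLaplacian_eq x)] at hleft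
  exact hleft.unique (hF'.comp y (hasDerivAt_pdy hu.differentiable x y))

lemma exists_partialDerivsBoundedBy (hF : ContDiff ℝ 2 F) (hu : IsSolution F c u) :
    ∃ M > 0, PartialDerivsBoundedBy u M := by
  obtain ⟨K₁, hK₁⟩ := hu.exists_abs_comp_le (hF.continuous_deriv (by norm_num))
  obtain ⟨K₂, hK₂⟩ := hu.exists_abs_comp_le ((hF.deriv' (n := 1)).continuous_deriv le_rfl)
  obtain ⟨C, hC, hgrad⟩ := exists_gradient_bound c
  set M₁ := C * (1 + K₁)
  have h₁ (x y : ℝ) : |pdx u x y| ≤ M₁ ∧ |pdy u x y| ≤ M₁ :=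
    hgrad u hu.contDiff_two x y 1 K₁ (fun p q _ _ => hu.abs_le_one p q)
      fun p q _ _ => by simpa only [hu.driftLaplacian_eq] using hK₁ p q
  have hK₁0 : 0 ≤ K₁ := (abs_nonneg _).trans (hK₁ 0 0)
  have hK₂0 : 0 ≤ K₂ := (abs_nonneg _).trans (hK₂ 0 0)
  set M₂ := C * (M₁ + K₂ * M₁)
  have h₂ (x y : ℝ) : |pdx (pdy u) x y| ≤ M₂ ∧ |pdyy u x y| ≤ M₂ :=
    hgrad (pdy u) (contDiff_pdy hu.contDiff (by norm_num)) x y M₁ (K₂ * M₁)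
      (fun p q _ _ => (h₁ p q).2) fun p q _ _ => by
        rw [hu.driftLaplacian_pdy hF, abs_mul]
        exact mul_le_mul (hK₂ p q) (h₁ p q).2 (abs_nonneg _) hK₂0
  have h₃ (x y : ℝ) : |pdxx u x y| ≤ K₁ + M₂ + |c| * M₁ := by
    have hxx : pdxx u x y = deriv F (u x y) - pdyy u x y - c * pdy u x y := by
      rw [← hu.driftLaplacian_eq, driftLaplacian]
      ring
    have hcy : |c * pdy u x y| ≤ |c| * M₁ := by
      rw [abs_mul]
      gcongr
      exact (h₁ x y).2
    rw [hxx]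
    linarith [abs_sub (deriv F (u x y) - pdyy u x y) (c * pdy u x y),
      abs_sub (deriv F (u x y)) (pdyy u x y), hK₁ x y, (h₂ x y).2]
  have hM₁ : 0 < M₁ := by positivity
  have hM₂ : 0 < M₂ := by positivity
  have hcM : 0 ≤ |c| * M₁ := by positivity
  refine ⟨K₁ + M₁ + M₂ + |c| * M₁, by positivity, fun x y => ?_, fun x y => ?_, fun x y => ?_,
    fun x y => ?_, fun x y => ?_⟩ <;> linarith [h₁ x y, h₂ x y, h₃ x y]

end IsSolution

namespace IsTravelingWave

lemma tendsto_integral_energyDensity (hF : Continuous F) (hu : IsTravelingWave F c u)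
    (hM : PartialDerivsBoundedBy u M) (a b : ℝ) :
    Tendsto (fun Y => ∫ x in a..b, energyDensity F (fun t => u t Y) x) atTop (𝓝 0) := by
  obtain ⟨hs, htop, -⟩ := hu
  have hux : ContDiff ℝ 1 (uncurry (pdx u)) := contDiff_pdx hs.contDiff (by norm_num)
  obtain ⟨K, hK⟩ := hs.exists_abs_comp_le (hF.sub (continuous_const (y := F 1)))
  have hlim (x : ℝ) : Tendsto (fun Y => energyDensity F (fun t => u t Y) x) atTop (𝓝 0) := by
    have hFu := ((hF.tendsto 1).comp (htop x)).sub_const (F 1)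
    have hpdx := ((tendsto_deriv_zero_of_tendsto_const (f := fun Y t => u t Y)
      (fun Y t => (hasDerivAt_pdx hs.differentiable t Y).differentiableAt)
      (fun Y t => (hasDerivAt_pdx (hux.differentiable (by simp)) t Y).differentiableAt)
      (fun Y t => hM.abs_pdxx_le t Y) htop x).pow 2).div_const 2
    rw [sub_self] at hFu
    simpa only [energyDensity, comp_apply, zero_pow two_ne_zero, zero_div, add_zero] using
      hFu.add hpdx
  have hbound (Y x : ℝ) : ‖energyDensity F (fun t => u t Y) x‖ ≤ K + M ^ 2 / 2 := by
    have hsq : pdx u x Y ^ 2 ≤ M ^ 2 := sq_le_sq.2 ((hM.abs_pdx_le x Y).trans (le_abs_self M))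
    refine (norm_add_le _ _).trans (add_le_add (hK x Y) ?_)
    rw [norm_of_nonneg (by positivity)]
    exact div_le_div_of_nonneg_right hsq zero_le_two
  have hcont (Y : ℝ) : Continuous (energyDensity F fun t => u t Y) :=
    continuous_energyDensity hF
      ((hs.contDiff.comp (contDiff_prodMk_left Y)).of_le (by norm_num))
  simpa only [intervalIntegral.integral_zero] using
    intervalIntegral.tendsto_integral_filter_of_dominated_convergence (μ := volume)
      (fun _ => K + M ^ 2 / 2) (.of_forall fun Y => (hcont Y).aestronglyMeasurable)
      (.of_forall fun Y => .of_forall fun x _ => hbound Y x) intervalIntegrable_const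
      (.of_forall fun x _ => hlim x)

lemma integral_energyDensity_le (hF : ContDiff ℝ 1 F) (hc : 0 ≤ c) (hu : IsTravelingWave F c u)
    (hM : PartialDerivsBoundedBy u M) {a b : ℝ} (hab : a ≤ b) (y₀ : ℝ) :
    ∫ x in a..b, energyDensity F (fun t => u t y₀) x ≤
      (∫ x in a..b, pdy u x y₀ ^ 2 / 2) + (M * (1 - u a y₀) + M * (1 - u b y₀)) := by
  have hs := hu.1
  have huy : ContDiff ℝ 1 (uncurry (pdy u)) := contDiff_pdy hs.contDiff (by norm_num)
  have hE (y : ℝ) : Continuous (energyDensity F fun t => u t y) :=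
    continuous_energyDensity hF.continuous
      ((hs.contDiff.comp (contDiff_prodMk_left y)).of_le (by norm_num))
  have hflux (y : ℝ) : ∫ x in a..b, energyFlux F u x y =
      (∫ x in a..b, pdy u x y ^ 2 / 2) - ∫ x in a..b, energyDensity F (fun t => u t y) x :=
    intervalIntegral.integral_sub
      ((((huy.continuous.uncurry_right y).pow 2).div_const 2).intervalIntegrable a b)
      ((hE y).intervalIntegrable a b)
  have hside (x : ℝ) {Y : ℝ} (hY : y₀ ≤ Y) :
      |∫ y in y₀..Y, pdx u x y * pdy u x y| ≤ M * (1 - u x y₀) := by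
    have hM0 : 0 ≤ M := (abs_nonneg _).trans (hM.abs_pdx_le 0 0)
    have hux : ContDiff ℝ 1 (u x) :=
      (hs.contDiff.comp (contDiff_prodMk_right x)).of_le (by norm_num)
    refine (abs_integral_mul_deriv_le hux (hM.abs_pdx_le x) (fun y => (hs.pdy_pos x y).le)
      hY).trans ?_
    gcongr
    exact (abs_le.1 (hs.abs_le_one x Y)).2
  have hlim := (hu.tendsto_integral_energyDensity hF.continuous hM a b).const_add
    ((∫ x in a..b, pdy u x y₀ ^ 2 / 2) + (M * (1 - u a y₀) + M * (1 - u b y₀)))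
  rw [add_zero] at hlim
  refine ge_of_tendsto hlim ((eventually_ge_atTop y₀).mono fun Y hY => ?_)
  have hineq := integral_energyFlux_add_le hF hs.contDiff_two hc hs.driftLaplacian_eq hab hY
  have hnonneg : 0 ≤ ∫ x in a..b, pdy u x Y ^ 2 / 2 :=
    intervalIntegral.integral_nonneg hab fun x _ => by positivity
  rw [hflux, hflux] at hineq
  linarith [le_of_abs_le (hside a hY), neg_le_of_abs_le (hside b hY)]

end IsTravelingWave

end TravelingWaveEstimates

section LowerBound

variable {F : ℝ → ℝ} {u : ℝ → ℝ → ℝ} {c M : ℝ}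

lemma integral_sq_div_two_le {f : ℝ → ℝ} {a b δ : ℝ} (hab : a ≤ b)
    (hf : ∀ x ∈ Ioc a b, |f x| ≤ δ) : ∫ x in a..b, f x ^ 2 / 2 ≤ δ ^ 2 / 2 * (b - a) := by
  rw [← abs_of_nonneg (sub_nonneg.2 hab)]
  refine (le_norm_self _).trans (intervalIntegral.norm_integral_le_of_norm_le_const fun x hx => ?_)
  rw [uIoc_of_le hab] at hx
  rw [norm_of_nonneg (by positivity)]
  exact div_le_div_of_nonneg_right (sq_le_sq.2 ((hf x hx).trans (le_abs_self δ))) zero_le_two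

lemma IsSolution.isApproxProfile {R δ x₀ y₀ : ℝ} (hu : IsSolution F c u)
    (hM : PartialDerivsBoundedBy u M) (hzero : u x₀ y₀ = 0)
    (hδ : ∀ x, |x - x₀| ≤ R → |pdyy u x y₀ + c * pdy u x y₀| ≤ δ) :
    IsApproxProfile F M δ R fun t => u (x₀ + t) y₀ where
  contDiff := hu.contDiff_two.comp (by fun_prop : ContDiff ℝ 2 fun t => (x₀ + t, y₀))
  abs_le_one t := hu.abs_le_one _ _
  abs_deriv_le t := by
    rw [deriv_comp_const_add (fun t => u t y₀)]
    exact hM.abs_pdx_le _ _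
  map_zero := by rwa [add_zero]
  abs_residual_le t ht := by
    have hd : deriv (fun t => u (x₀ + t) y₀) = fun t => pdx u (x₀ + t) y₀ :=
      funext (deriv_comp_const_add (fun t => u t y₀) x₀)
    have heq := hu.driftLaplacian_eq (x₀ + t) y₀
    rw [hd, deriv_comp_const_add (fun t => pdx u t y₀), ← heq, driftLaplacian, pdxx,
      ← abs_neg]
    convert hδ (x₀ + t) (by rwa [add_sub_cancel_left]) using 2
    ring

lemma IsSolution.exists_abs_pdyy_add_le (hF : ContDiff ℝ 2 F) (hu : IsSolution F c u) :
    ∃ C, ∀ x₀ y₀ δ, (∀ x y, |x - x₀| ≤ 1 → |y - y₀| ≤ 1 → pdy u x y ≤ δ) →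
      |pdyy u x₀ y₀ + c * pdy u x₀ y₀| ≤ C * δ := by
  obtain ⟨K, hK⟩ := hu.exists_abs_comp_le ((hF.deriv' (n := 1)).continuous_deriv le_rfl)
  obtain ⟨C, -, hgrad⟩ := exists_gradient_bound c
  have hK0 : 0 ≤ K := (abs_nonneg _).trans (hK 0 0)
  refine ⟨C * (1 + K) + |c|, fun x₀ y₀ δ hδ => ?_⟩
  have hpdyy : |pdyy u x₀ y₀| ≤ C * (δ + K * δ) :=
    (hgrad (pdy u) (contDiff_pdy hu.contDiff (by norm_num)) x₀ y₀ δ (K * δ)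
      (fun x y hx hy => by rw [abs_of_pos (hu.pdy_pos x y)]; exact hδ x y hx hy)
      fun x y hx hy => by
        rw [hu.driftLaplacian_pdy hF, abs_mul, abs_of_pos (hu.pdy_pos x y)]
        exact mul_le_mul (hK x y) (hδ x y hx hy) (hu.pdy_pos x y).le hK0).2
  have hdrift : |c * pdy u x₀ y₀| ≤ |c| * δ := by
    rw [abs_mul, abs_of_pos (hu.pdy_pos x₀ y₀)]
    exact mul_le_mul_of_nonneg_left (hδ x₀ y₀ (by simp) (by simp)) (abs_nonneg c)
  linarith [abs_add_le (pdyy u x₀ y₀) (c * pdy u x₀ y₀)]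

lemma IsSolution.exists_pdy_le_of_pdy_lt (hF : ContDiff ℝ 2 F) (hu : IsSolution F c u)
    {δ : ℝ} (hδ : 0 < δ) (R : ℝ) :
    ∃ ε > 0, ∀ x₀ y₀, pdy u x₀ y₀ < ε →
      ∀ x y, |x - x₀| ≤ R → |y - y₀| ≤ R → pdy u x y ≤ δ := by
  obtain ⟨K, hK⟩ := hu.exists_abs_comp_le ((hF.deriv' (n := 1)).continuous_deriv le_rfl)
  obtain ⟨M, hM, hbound⟩ := hu.exists_partialDerivsBoundedBy hF
  obtain ⟨ε, hε, hsmall⟩ := exists_pos_forall_le_of_driftLaplacian_le c (R := R)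
    ((abs_nonneg _).trans (hK 0 0)) hM hδ
  refine ⟨ε, hε, hsmall (pdy u) (contDiff_pdy hu.contDiff (by norm_num))
    (fun x y => (hu.pdy_pos x y).le) (fun x y => ?_) hbound.abs_pdx_pdy_le hbound.abs_pdyy_le⟩
  rw [hu.driftLaplacian_pdy hF]
  exact mul_le_mul_of_nonneg_right (le_of_abs_le (hK x y)) (hu.pdy_pos x y).le

lemma IsTravelingWave.exists_pos_le_pdy (hF : IsUnbalancedPotential F) (hc : 0 ≤ c)
    (hu : IsTravelingWave F c u) : ∃ ε > 0, ∀ x y, u x y = 0 → ε ≤ pdy u x y := by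
  have hs := hu.1
  obtain ⟨M, hM, hbound⟩ := hs.exists_partialDerivsBoundedBy hF.contDiff
  obtain ⟨κ, hκ, R, hR, δ₁, hδ₁, hgain⟩ := hF.exists_energy_gain hM
  obtain ⟨C, hres⟩ := hs.exists_abs_pdyy_add_le hF.contDiff
  obtain ⟨δ, hδ, hCδ, hRδ⟩ : ∃ δ > 0, C * δ ≤ δ₁ ∧ R * δ ^ 2 < κ := by
    have hC' : ∀ᶠ δ in 𝓝[>] (0 : ℝ), C * δ < δ₁ :=
      nhdsWithin_le_nhds ((by fun_prop : ContinuousAt (fun δ : ℝ => C * δ) 0).eventually_lt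
        continuousAt_const (by simpa using hδ₁))
    have hR' : ∀ᶠ δ in 𝓝[>] (0 : ℝ), R * δ ^ 2 < κ :=
      nhdsWithin_le_nhds ((by fun_prop : ContinuousAt (fun δ : ℝ => R * δ ^ 2) 0).eventually_lt
        continuousAt_const (by simpa using hκ))
    exact (eventually_mem_nhdsWithin.and (hC'.and hR')).exists.imp
      fun δ h => ⟨h.1, h.2.1.le, h.2.2⟩
  obtain ⟨ε, hε, hsmall⟩ := hs.exists_pdy_le_of_pdy_lt hF.contDiff hδ (R + 1)
  refine ⟨ε, hε, fun x₀ y₀ hzero => ?_⟩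
  by_contra! hlt
  have hpdy := hsmall x₀ y₀ hlt
  have hprofile : IsApproxProfile F M δ₁ R fun t => u (x₀ + t) y₀ :=
    hs.isApproxProfile hbound hzero fun x hx => (hres x y₀ δ fun p q hp hq => hpdy p q
      (by linarith [abs_sub_le p x x₀]) (by linarith)).trans hCδ
  obtain ⟨a, ha, b, hb, hab⟩ := hgain _ hprofile
  simp only [energyDensity_comp_const_add F (fun t => u t y₀)] at hab
  rw [intervalIntegral.integral_comp_add_left (energyDensity F fun t => u t y₀)] at hab
  have hle : x₀ + a ≤ x₀ + b := by linarith [ha.2, hb.1]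
  have hup := hu.integral_energyDensity_le (hF.contDiff.of_le (by norm_num)) hc hbound hle y₀
  have hkin : ∫ x in (x₀ + a)..(x₀ + b), pdy u x y₀ ^ 2 / 2 ≤ R * δ ^ 2 := calc
    _ ≤ δ ^ 2 / 2 * (x₀ + b - (x₀ + a)) := integral_sq_div_two_le hle fun x hx => by
      have hxR : |x - x₀| ≤ R := abs_le.2 ⟨by linarith [ha.1, hx.1], by linarith [hb.2, hx.2]⟩
      rw [abs_of_pos (hs.pdy_pos x y₀)]
      exact hpdy x y₀ (by linarith) (by rw [sub_self, abs_zero]; linarith)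
    _ ≤ δ ^ 2 / 2 * (2 * R) := by
      gcongr
      linarith [ha.1, hb.2]
    _ = R * δ ^ 2 := by ring
  linarith

end LowerBound

section LevelSet

lemma exists_contDiff_graph {E : Type*} [NormedAddCommGroup E] [NormedSpace ℝ E]
    [CompleteSpace E] {u : E → ℝ → ℝ} {n : WithTop ℕ∞} (hn : n ≠ 0)
    (hu : ContDiff ℝ n (uncurry u)) (hpos : ∀ x y, 0 < deriv (u x) y)
    (hle : ∀ x, ∃ y, u x y ≤ 0) (hge : ∀ x, ∃ y, 0 ≤ u x y) :
    ∃ k : E → ℝ, ContDiff ℝ n k ∧ ∀ x y, u x y = 0 ↔ y = k x := by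
  choose k hk using fun x =>
    mem_range_of_exists_le_of_exists_ge (hu.continuous.uncurry_left x) (hle x) (hge x)
  have hiff (x : E) (y : ℝ) : u x y = 0 ↔ y = k x :=
    ⟨fun h => (strictMono_of_deriv_pos (hpos x)).injective (h.trans (hk x).symm),
      fun h => h ▸ hk x⟩
  refine ⟨k, contDiff_iff_contDiffAt.2 fun x => ?_, hiff⟩
  have hinv : (fderiv ℝ (uncurry u) (x, k x) ∘L .inr ℝ E ℝ).IsInvertible := by
    refine ⟨ContinuousLinearEquiv.unitsEquivAut ℝ (Units.mk0 _ (hpos x (k x)).ne'), ?_⟩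
    have hderiv : deriv (u x) (k x) = fderiv ℝ (uncurry u) (x, k x) (0, 1) :=
      (hasDerivAt_comp_prodMk_right (hu.differentiable hn (x, k x))).deriv
    ext
    simp [hderiv]
  have hcd := hu.contDiffAt (x := (x, k x))
  refine (hcd.contDiffAt_implicitFunction hn hinv).congr_of_eventuallyEq ?_
  filter_upwards [hcd.eventually_apply_implicitFunction hn hinv] with t ht
  exact ((hiff t _).1 (ht.trans (hk x))).symm

lemma pdx_add_deriv_mul_pdy_eq_zero {u : ℝ → ℝ → ℝ} {k : ℝ → ℝ} {x : ℝ}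
    (hu : Differentiable ℝ (uncurry u)) (hk : DifferentiableAt ℝ k x)
    (hzero : ∀ x, u x (k x) = 0) : pdx u x (k x) + deriv k x * pdy u x (k x) = 0 := by
  have hchain : HasDerivAt (fun t => u t (k t)) (fderiv ℝ (uncurry u) (x, k x) (1, deriv k x)) x :=
    HasFDerivAt.comp_hasDerivAt (f := fun t => (t, k t)) x (hu (x, k x)).hasFDerivAt
      ((hasDerivAt_id x).prodMk hk.hasDerivAt)
  rw [funext hzero] at hchain
  rw [pdx_eq_fderiv hu, pdy_eq_fderiv hu, ← smul_eq_mul, ← map_smul, ← map_add]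
  simpa using hchain.unique (hasDerivAt_const x 0)

end LevelSet

theorem unbalanced_level_set_globally_Lipschitz_general {F : ℝ → ℝ}
    (hF : IsUnbalancedPotential F) {c : ℝ} (hc : 0 ≤ c) {u : ℝ → ℝ → ℝ}
    (hu : IsTravelingWave F c u) :
    ∃ k : ℝ → ℝ, ContDiff ℝ 3 k ∧ (∀ x y : ℝ, u x y = 0 ↔ y = k x) ∧
      ∃ C > (0 : ℝ), ∀ x : ℝ, |deriv k x| ≤ C := by
  obtain ⟨hs, htop, hbot⟩ := id hu
  obtain ⟨M, hM, hbound⟩ := hs.exists_partialDerivsBoundedBy hF.contDiff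
  obtain ⟨ε, hε, hlow⟩ := hu.exists_pos_le_pdy hF hc
  obtain ⟨k, hk, hiff⟩ := exists_contDiff_graph (by norm_num) hs.contDiff hs.pdy_pos
    (fun x => ((hbot x).eventually_le_const (by norm_num)).exists)
    (fun x => ((htop x).eventually_const_le (by norm_num)).exists)
  have hzero (x : ℝ) : u x (k x) = 0 := (hiff x (k x)).2 rfl
  refine ⟨k, hk, hiff, M / ε, div_pos hM hε, fun x => (le_div_iff₀ hε).2 ?_⟩
  have hkd := pdx_add_deriv_mul_pdy_eq_zero hs.differentiable (hk.differentiable (by simp) x) hzero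
  calc |deriv k x| * ε ≤ |deriv k x| * pdy u x (k x) := by gcongr; exact hlow x _ (hzero x)
    _ = |pdx u x (k x)| := by
      rw [eq_neg_of_add_eq_zero_left hkd, abs_neg, abs_mul, abs_of_pos (hs.pdy_pos x (k x))]
    _ ≤ M := hbound.abs_pdx_le x (k x)

/-- The zero level set of a monotone traveling wave of the unbalanced
Allen-Cahn equation is the graph of a globally Lipschitz `C³` function
(Lemma 3.1). -/
theorem unbalanced_level_set_globally_Lipschitz
    (F : ℝ → ℝ) (hF : UnbalancedDoubleWell F) (c : ℝ) (hc : 0 < c)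
    (u : ℝ → ℝ → ℝ) (hu : IsTravelingWave F c u) :
    ∃ k : ℝ → ℝ, ContDiff ℝ 3 k ∧ (∀ x y : ℝ, u x y = 0 ↔ y = k x) ∧
      ∃ C > (0 : ℝ), ∀ x : ℝ, |deriv k x| ≤ C := by
  exact unbalanced_level_set_globally_Lipschitz_general hF.isUnbalancedPotential hc.le hu
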